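/- Any two injective Lie algebra homomorphisms ε, ε' from the complex simple Lie algebra e₇ to the complex simple Lie algebra e₈ are conjugate by an automorphism of e₈: there exists a Lie algebra automorphism φ of e₈ such that ε' = φ ∘ ε. -/

import Mathlib

/-!
Every embedding of `e₇` into `e₈` is the standard one, given by the inclusion of Dynkin diagrams,
followed by an automorphism of `e₈`. The automorphism is found by extending the images of the
Chevalley generators of `e₇` to a system of Chevalley generators of type `E₈` inside `e₈`: by the
Serre presentation such a system is the image of the standard one under an endomorphism of `e₈`,
which is an automorphism because `e₈` is simple.

All that is known of `e₈` at first is its presentation. This yields a triangular decomposition and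
locally nilpotent `ad e_i`, `ad f_i`, hence weight multiplicities invariant under the Weyl group.
As the Cartan matrix is positive definite, every nonzero weight is conjugate to a simple root and
has multiplicity at most one, so `dim e₈ ≤ 8 + 240`. The same descent, applied to the weights of an
ideal, shows that `e₈` is simple if it is nonzero.

The `126` root weights of an embedded `e₇` have a common multiplicity `m` in `e₈`, and
`2 * 126 > 248` forces `m = 1`. Therefore the images of the Chevalley generators are root vectors
for a suitable Cartan subalgebra of `e₈`, and the irreducible root system of `e₈` contains simple
roots `a 0, …, a 6` of type `E₇`. It has more than `126` roots because `dim e₈ > 133`, so by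
irreducibility some root restricts to the minuscule weight of `E₇`. The negative of that root
extends the diagram of the `a i` to that of `E₈`, and an `sl₂`-triple for it completes the
generators.
-/

namespace E7E8

open LieAlgebra LieModule Module Matrix CartanMatrix

/-! ### Roots of simply laced Cartan matrices -/

section Roots

theorem single_one_le {ι : Type*} [DecidableEq ι] {c : ι → ℤ} (hc : 0 ≤ c) {i : ι} (hi : 0 < c i) :
    Pi.single i 1 ≤ c := by
  intro j
  obtain rfl | hj := eq_or_ne j i
  · simpa using! hi
  · simpa [hj] using! hc j

/-- The simple reflection `s i` of the root lattice, in the coordinates given by the simple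
roots. -/
def simpleReflection {ι : Type*} [Fintype ι] [DecidableEq ι] (A : Matrix ι ι ℤ) (i : ι)
    (c : ι → ℤ) : ι → ℤ :=
  c - Pi.single i ((A *ᵥ c) i)

/-- `A` is a connected simply laced Cartan matrix of finite type: one of type `ADE`. -/
structure IsADE {ι : Type*} [Fintype ι] (A : Matrix ι ι ℤ) : Prop where
  isSymm : A.IsSymm
  diag_eq_two : ∀ i, A i i = 2
  nonpos : ∀ i j, i ≠ j → A i j ≤ 0
  pos : ∀ c, c ≠ 0 → 0 < c ⬝ᵥ A *ᵥ c
  connected : ∀ s : Finset ι, s.Nonempty → (∀ i ∈ s, ∀ j ∉ s, A j i = 0) → s = Finset.univ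

/-- Roots are the vectors of norm two of the root lattice, in the coordinates given by the simple
roots. -/
def IsRoot {ι : Type*} [Fintype ι] (A : Matrix ι ι ℤ) (c : ι → ℤ) : Prop :=
  c ⬝ᵥ A *ᵥ c = 2

variable {ι : Type*} [Fintype ι] {A : Matrix ι ι ℤ}

theorem IsRoot.neg {c : ι → ℤ} (hc : IsRoot A c) : IsRoot A (-c) := by
  rwa [IsRoot, mulVec_neg, neg_dotProduct_neg]

theorem IsRoot.ne_zero {c : ι → ℤ} (hc : IsRoot A c) : c ≠ 0 := by
  rintro rfl
  simp [IsRoot] at hc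

theorem sum_pos_of_nonneg {c : ι → ℤ} (hc : 0 ≤ c) (h0 : c ≠ 0) : 0 < ∑ i, c i := by
  refine (Finset.sum_nonneg fun i _ => hc i).lt_of_ne' fun h => h0 ?_
  exact funext fun i => (Finset.sum_eq_zero_iff_of_nonneg fun i _ => hc i).1 h i (Finset.mem_univ i)

theorem exists_pos_of_norm_pos {c : ι → ℤ} (hc : 0 ≤ c) (hpos : 0 < c ⬝ᵥ A *ᵥ c) :
    ∃ i, 0 < c i ∧ 0 < (A *ᵥ c) i := by
  obtain ⟨i, -, hi⟩ := Finset.exists_lt_of_sum_lt (f := fun _ => (0 : ℤ)) (by simpa using! hpos)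
  exact ⟨i, (hc i).lt_of_ne fun h => by simp [← h] at hi, pos_of_mul_pos_right hi (hc i)⟩

namespace IsADE

theorem forall_of_apply (hA : IsADE A) {p : ι → Prop} (hp : ∀ i j, A i j ≠ 0 → p i → p j) {i : ι}
    (hi : p i) (j : ι) : p j := by
  classical
  have huniv := hA.connected {i | p i} ⟨i, by simpa using hi⟩ fun i hi j hj => by
    rw [Finset.mem_filter_univ] at hi hj
    exact not_not.1 fun h => hj (hp i j (by rwa [hA.isSymm.apply]) hi)
  simpa using huniv.ge (Finset.mem_univ j)

theorem dotProduct_mulVec_comm (hA : IsADE A) (c d : ι → ℤ) : c ⬝ᵥ A *ᵥ d = d ⬝ᵥ A *ᵥ c := by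
  rw [dotProduct_mulVec, dotProduct_comm, ← mulVec_transpose, hA.isSymm.eq]

theorem norm_add (hA : IsADE A) (c d : ι → ℤ) :
    (c + d) ⬝ᵥ A *ᵥ (c + d) = c ⬝ᵥ A *ᵥ c + 2 * (c ⬝ᵥ A *ᵥ d) + d ⬝ᵥ A *ᵥ d := by
  rw [mulVec_add, add_dotProduct, dotProduct_add, dotProduct_add, hA.dotProduct_mulVec_comm d c]
  ring

theorem mulVec_injective (hA : IsADE A) : Function.Injective (A *ᵥ ·) := by
  intro c d hcd
  by_contra h
  have := hA.pos (c - d) (sub_ne_zero.2 h)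
  rw [mulVec_sub, show A *ᵥ c = A *ᵥ d from hcd, sub_self, dotProduct_zero] at this
  exact this.false

theorem norm_single [DecidableEq ι] (hA : IsADE A) (i : ι) (n : ℤ) :
    Pi.single i n ⬝ᵥ A *ᵥ Pi.single i n = 2 * n ^ 2 := by
  simp only [mulVec_single, single_dotProduct, Pi.smul_apply, col_apply, hA.diag_eq_two,
    MulOpposite.smul_eq_mul_unop, MulOpposite.unop_op]
  ring

theorem norm_add_single [DecidableEq ι] (hA : IsADE A) (c : ι → ℤ) (i : ι) (n : ℤ) :
    (c + Pi.single i n) ⬝ᵥ A *ᵥ (c + Pi.single i n) =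
      c ⬝ᵥ A *ᵥ c + 2 * n * (A *ᵥ c) i + 2 * n ^ 2 := by
  rw [hA.norm_add, hA.norm_single, hA.dotProduct_mulVec_comm _ (Pi.single _ _), single_dotProduct]
  ring

theorem even_norm (hA : IsADE A) (c : ι → ℤ) : Even (c ⬝ᵥ A *ᵥ c) := by
  classical
  induction c using Pi.single_induction with
  | zero => simp
  | add c d hc hd => exact hA.norm_add c d ▸ (hc.add (even_two_mul _)).add hd
  | single i n => exact hA.norm_single i n ▸ even_two_mul _

theorem two_le_norm (hA : IsADE A) {c : ι → ℤ} (hc : c ≠ 0) : 2 ≤ c ⬝ᵥ A *ᵥ c := by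
  obtain ⟨n, hn⟩ := hA.even_norm c
  have := hA.pos c hc
  omega

theorem eq_zero_or_eq_neg_one (hA : IsADE A) {i j : ι} (hij : i ≠ j) :
    A i j = 0 ∨ A i j = -1 := by
  classical
  have h : Pi.single i 1 + Pi.single j 1 ≠ (0 : ι → ℤ) := fun h => by
    simpa [hij] using congrFun h i
  have := hA.pos _ h
  rw [hA.norm_add_single, hA.norm_single] at this
  have hle : A i j ≤ 0 := hA.nonpos _ _ hij
  simp only [mulVec_single_one, col_apply] at this
  rw [hA.isSymm.apply] at this
  omega

end IsADE

theorem IsRoot.nonneg_or_nonpos (hA : IsADE A) {c : ι → ℤ} (hc : IsRoot A c) : 0 ≤ c ∨ c ≤ 0 := by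
  by_contra! h
  have hpos : c⁺ ≠ 0 := fun h0 => h.2 (posPart_eq_zero.1 h0)
  have hneg : -c⁻ ≠ 0 := fun h0 => h.1 (negPart_eq_zero.1 (neg_eq_zero.1 h0))
  have hmixed : 0 ≤ c⁺ ⬝ᵥ A *ᵥ (-c⁻) := by
    refine Finset.sum_nonneg fun i _ => ?_
    rw [mulVec, dotProduct, Finset.mul_sum]
    refine Finset.sum_nonneg fun j _ => ?_
    simp only [Pi.neg_apply, Pi.posPart_apply, Pi.negPart_apply]
    obtain rfl | hij := eq_or_ne i j
    · obtain h | h := le_total 0 (c i)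
      · simp [negPart_eq_zero.2 h]
      · simp [posPart_eq_zero.2 h]
    · exact mul_nonneg (posPart_nonneg _) (mul_nonneg_of_nonpos_of_nonpos (hA.nonpos _ _ hij)
        (neg_nonpos.2 (negPart_nonneg _)))
  have hsum := hA.norm_add c⁺ (-c⁻)
  rw [← sub_eq_add_neg, posPart_sub_negPart, hc] at hsum
  linarith [hA.two_le_norm hpos, hA.two_le_norm hneg]

variable [DecidableEq ι]

section SimpleReflection

theorem mulVec_simpleReflection (i : ι) (c : ι → ℤ) :
    A *ᵥ simpleReflection A i c = A *ᵥ c - (A *ᵥ c) i • A.col i := by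
  simp [simpleReflection, mulVec_sub, mulVec_single, mul_comm]

theorem simpleReflection_neg (i : ι) (c : ι → ℤ) :
    simpleReflection A i (-c) = -simpleReflection A i c := by
  simp only [simpleReflection, mulVec_neg, Pi.neg_apply, Pi.single_neg]
  abel

theorem simpleReflection_simpleReflection (hA : ∀ i, A i i = 2) (i : ι) (c : ι → ℤ) :
    simpleReflection A i (simpleReflection A i c) = c := by
  have : (A *ᵥ simpleReflection A i c) i = -(A *ᵥ c) i := by
    simp only [mulVec_simpleReflection, Pi.sub_apply, Pi.smul_apply, col_apply, hA, smul_eq_mul]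
    ring
  rw [simpleReflection, this, simpleReflection, Pi.single_neg, sub_neg_eq_add, sub_add_cancel]

theorem simpleReflection_single (i j : ι) (n : ℤ) :
    simpleReflection A i (Pi.single j n) = Pi.single j n - Pi.single i (n * A i j) := by
  simp [simpleReflection, mulVec_single, mul_comm]

end SimpleReflection

namespace IsRoot

variable {c d : ι → ℤ}

theorem single (hA : IsADE A) (i : ι) : IsRoot A (Pi.single i 1) := by
  rw [IsRoot, hA.norm_single, one_pow, mul_one]

theorem simpleReflection (hA : IsADE A) (hc : IsRoot A c) (i : ι) :
    IsRoot A (simpleReflection A i c) := by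
  rw [IsRoot, E7E8.simpleReflection, sub_eq_add_neg, ← Pi.single_neg, hA.norm_add_single, hc]
  ring

theorem mulVec_le_one (hA : IsADE A) (hc : IsRoot A c) {i : ι} (h : c ≠ Pi.single i 1) :
    (A *ᵥ c) i ≤ 1 := by
  have h0 : c + Pi.single i (-1) ≠ 0 := by
    rwa [Pi.single_neg, ← sub_eq_add_neg, sub_ne_zero]
  have := hA.pos _ h0
  rw [hA.norm_add_single, hc] at this
  linarith

end IsRoot

theorem IsADE.exists_single_of_nonneg (hA : IsADE A) {Q : (ι → ℤ) → Prop}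
    (hQ : ∀ i c, Q c → Q (simpleReflection A i c)) (hsign : ∀ c, Q c → 0 ≤ c ∨ c ≤ 0)
    (hmult : ∀ i (n : ℤ), 0 < n → Q (Pi.single i n) → n = 1) {c : ι → ℤ} (h0 : c ≠ 0) (hc : Q c)
    (hnonneg : 0 ≤ c) : ∃ i, Q (Pi.single i 1) := by
  induction hN : (∑ i, c i).toNat using Nat.strong_induction_on generalizing c with | _ N ih
  obtain ⟨i, hci, hAi⟩ := exists_pos_of_norm_pos hnonneg (hA.pos c h0)
  have hr : simpleReflection A i c ≠ 0 := fun h => h0 <| by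
    rw [← simpleReflection_simpleReflection hA.diag_eq_two i c, h]
    simp [simpleReflection]
  obtain hpos | hneg := hsign _ (hQ i c hc)
  · refine ih _ ?_ hr (hQ i c hc) hpos rfl
    have hsum : 0 ≤ ∑ j, simpleReflection A i c j := Finset.sum_nonneg fun j _ => hpos j
    simp only [simpleReflection, Pi.sub_apply, Finset.sum_sub_distrib, Finset.sum_pi_single',
      Finset.mem_univ, if_true] at hsum ⊢
    omega
  · have hsingle : c = Pi.single i (c i) := by
      funext j
      obtain rfl | hj := eq_or_ne j i
      · simp
      · have := hneg j
        simp only [simpleReflection, Pi.sub_apply, Pi.single_eq_of_ne hj, sub_zero] at this ⊢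
        exact le_antisymm this (hnonneg j)
    rw [hsingle] at hc
    exact ⟨i, hmult i _ hci hc ▸ hc⟩

/-- A property stable under simple reflections that holds only for vectors of constant sign, and
for no proper multiple of a simple root, descends to a simple root. -/
theorem IsADE.exists_single (hA : IsADE A) {Q : (ι → ℤ) → Prop}
    (hQ : ∀ i c, Q c → Q (simpleReflection A i c)) (hsign : ∀ c, Q c → 0 ≤ c ∨ c ≤ 0)
    (hmult : ∀ i (n : ℤ), 0 < n → Q (Pi.single i n) → n = 1) {c : ι → ℤ} (h0 : c ≠ 0) (hc : Q c) :
    ∃ i, Q (Pi.single i 1) := by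
  have reflect (i : ι) (n : ℤ) (h : Q (-Pi.single i n)) : Q (Pi.single i n) := by
    have := hQ i _ h
    rwa [simpleReflection_neg, simpleReflection_single, hA.diag_eq_two, ← Pi.single_sub,
      ← Pi.single_neg, show -(n - n * 2) = n by ring] at this
  obtain hpos | hneg := hsign c hc
  · exact hA.exists_single_of_nonneg hQ hsign hmult h0 hc hpos
  · obtain ⟨i, hi⟩ := hA.exists_single_of_nonneg (Q := fun c => Q (-c))
      (fun i c h => simpleReflection_neg (A := A) i c ▸ hQ i _ h)
      (fun c h => (hsign _ h).symm.imp neg_nonpos.1 neg_nonneg.1)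
      (fun i n hn h => hmult i n hn (reflect i n h)) (neg_ne_zero.2 h0) (by rwa [neg_neg])
      (neg_nonneg.2 hneg)
    exact ⟨i, reflect i 1 hi⟩

namespace IsRoot

theorem of_single (hA : IsADE A) {i : ι} {n : ℤ} (hn : 0 < n) (h : IsRoot A (Pi.single i n)) :
    n = 1 := by
  rw [IsRoot, hA.norm_single] at h
  nlinarith

/-- The Weyl group acts transitively on the roots. -/
theorem induction (hA : IsADE A) {p : (ι → ℤ) → Prop}
    (hp : ∀ i c, p c → p (E7E8.simpleReflection A i c)) {c d : ι → ℤ} (hc : IsRoot A c)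
    (hpc : p c) (hd : IsRoot A d) : p d := by
  have hp' (i : ι) (c : ι → ℤ) (h : p (E7E8.simpleReflection A i c)) : p c :=
    simpleReflection_simpleReflection hA.diag_eq_two i c ▸ hp i _ h
  have descend (p : (ι → ℤ) → Prop) (hp : ∀ i c, p c → p (E7E8.simpleReflection A i c))
      {c : ι → ℤ} (hc : IsRoot A c) (hpc : p c) : ∃ i, p (Pi.single i 1) := by
    obtain ⟨i, -, hi⟩ := hA.exists_single (Q := fun c => IsRoot A c ∧ p c)
      (fun i c h => ⟨h.1.simpleReflection hA i, hp i c h.2⟩) (fun c h => h.1.nonneg_or_nonpos hA)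
      (fun i n hn h => h.1.of_single hA hn) hc.ne_zero ⟨hc, hpc⟩
    exact ⟨i, hi⟩
  have neighbour (i j : ι) (hij : A i j ≠ 0) (h : p (Pi.single i 1)) : p (Pi.single j 1) := by
    obtain rfl | hne := eq_or_ne i j
    · exact h
    have hA1 := (hA.eq_zero_or_eq_neg_one hne).resolve_left hij
    refine hp' i _ (hp' j _ ?_)
    have hsum : E7E8.simpleReflection A i (Pi.single j 1) = Pi.single j 1 + Pi.single i 1 := by
      simp [simpleReflection_single, hA1, Pi.single_neg]
    have : E7E8.simpleReflection A j (Pi.single j 1 + Pi.single i 1) = Pi.single i 1 := by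
      simp [E7E8.simpleReflection, mulVec_add, hA.diag_eq_two, hA.isSymm.apply i j, hA1]
    rwa [hsum, this]
  by_contra hpd
  obtain ⟨i, hi⟩ := descend p hp hc hpc
  obtain ⟨j, hj⟩ := descend (fun c => ¬ p c) (fun i c h h' => h (hp' i c h')) hd hpd
  exact hj (hA.forall_of_apply neighbour hi j)

end IsRoot

/-- The positive roots of height `k + 1`, computed level by level: a simple root is added whenever
it has product `-1` with the root found so far. -/
def rootsOfHeight (A : Matrix ι ι ℤ) : ℕ → Finset (ι → ℤ)
  | 0 => Finset.univ.image fun i => Pi.single i 1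
  | k + 1 => (rootsOfHeight A k).biUnion fun c =>
      (Finset.univ.filter fun i => (A *ᵥ c) i = -1).image fun i => c + Pi.single i 1

theorem mem_rootsOfHeight (hA : IsADE A) {k : ℕ} {c : ι → ℤ} :
    c ∈ rootsOfHeight A k ↔ IsRoot A c ∧ 0 ≤ c ∧ ∑ i, c i = k + 1 := by
  induction k generalizing c with
  | zero =>
    simp only [rootsOfHeight, Finset.mem_image, Finset.mem_univ, true_and]
    constructor
    · rintro ⟨i, rfl⟩
      exact ⟨.single hA i, Pi.single_nonneg.2 zero_le_one, by simp⟩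
    · rintro ⟨hc, hpos, hsum⟩
      obtain ⟨i, hci, -⟩ := exists_pos_of_norm_pos hpos (hc ▸ two_pos)
      refine ⟨i, (sub_eq_zero.1 ?_).symm⟩
      by_contra h0
      have := sum_pos_of_nonneg (sub_nonneg.2 (single_one_le hpos hci)) h0
      simp [hsum] at this
  | succ k ih =>
    simp only [rootsOfHeight, Finset.mem_biUnion, Finset.mem_image, Finset.mem_filter,
      Finset.mem_univ, true_and, ih]
    constructor
    · rintro ⟨c, ⟨hc, hpos, hsum⟩, i, hi, rfl⟩
      refine ⟨?_, add_nonneg hpos (Pi.single_nonneg.2 zero_le_one), ?_⟩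
      · rw [IsRoot, hA.norm_add_single, hc, hi]
        norm_num
      · simp [Finset.sum_add_distrib, hsum]
    · rintro ⟨hc, hpos, hsum⟩
      obtain ⟨i, hci, hAi⟩ := exists_pos_of_norm_pos hpos (hc ▸ two_pos)
      have hne : c ≠ Pi.single i 1 := by
        rintro rfl
        rw [Finset.sum_pi_single', if_pos (Finset.mem_univ i)] at hsum
        omega
      have hAi1 : (A *ᵥ c) i = 1 := le_antisymm (hc.mulVec_le_one hA hne) hAi
      refine ⟨simpleReflection A i c, ⟨hc.simpleReflection hA i, ?_, ?_⟩, i, ?_, ?_⟩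
      · rw [simpleReflection, hAi1, sub_nonneg]
        exact single_one_le hpos hci
      · simp [simpleReflection, hAi1, hsum]
      · simp [mulVec_simpleReflection, hAi1, hA.diag_eq_two]
      · rw [simpleReflection, hAi1, sub_add_cancel]

theorem rootsOfHeight_eq_empty_of_le {m n : ℕ} (hmn : m ≤ n) (hm : rootsOfHeight A m = ∅) :
    rootsOfHeight A n = ∅ := by
  induction n, hmn using Nat.le_induction with
  | base => exact hm
  | succ n _ ih => rw [rootsOfHeight, ih, Finset.biUnion_empty]

theorem mem_biUnion_rootsOfHeight (hA : IsADE A) {n : ℕ} (hn : rootsOfHeight A n = ∅) {c : ι → ℤ} :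
    c ∈ (Finset.range n).biUnion (rootsOfHeight A) ↔ IsRoot A c ∧ 0 ≤ c := by
  simp only [Finset.mem_biUnion, Finset.mem_range, mem_rootsOfHeight hA]
  refine ⟨fun ⟨_, _, hc, hpos, _⟩ => ⟨hc, hpos⟩, fun ⟨hc, hpos⟩ => ?_⟩
  have hsum := sum_pos_of_nonneg hpos hc.ne_zero
  have hheight : ∑ i, c i = ((∑ i, c i).toNat - 1 : ℕ) + 1 := by omega
  refine ⟨(∑ i, c i).toNat - 1, ?_, hc, hpos, hheight⟩
  by_contra! hle
  have := (mem_rootsOfHeight hA).2 ⟨hc, hpos, hheight⟩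
  rw [rootsOfHeight_eq_empty_of_le hle hn] at this
  exact Finset.notMem_empty c this

theorem exists_finset_isRoot (hA : IsADE A) {n : ℕ} (hn : rootsOfHeight A n = ∅) :
    ∃ s : Finset (ι → ℤ), (∀ c, c ∈ s ↔ IsRoot A c) ∧
      s.card = 2 * ∑ k ∈ Finset.range n, (rootsOfHeight A k).card := by
  set P := (Finset.range n).biUnion (rootsOfHeight A)
  have hP {c : ι → ℤ} : c ∈ P ↔ IsRoot A c ∧ 0 ≤ c := mem_biUnion_rootsOfHeight hA hn
  have hPneg {c : ι → ℤ} : c ∈ P.image Neg.neg ↔ IsRoot A c ∧ c ≤ 0 := by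
    refine Finset.mem_image.trans ⟨?_, fun h => ⟨-c, ?_, neg_neg c⟩⟩
    · rintro ⟨d, hd, rfl⟩
      exact ⟨(hP.1 hd).1.neg, neg_nonpos.2 (hP.1 hd).2⟩
    · exact hP.2 ⟨h.1.neg, neg_nonneg.2 h.2⟩
  have hdisj : Disjoint P (P.image Neg.neg) := Finset.disjoint_left.2 fun c h h' =>
    (hP.1 h).1.ne_zero (le_antisymm (hPneg.1 h').2 (hP.1 h).2)
  have hcard : P.card = ∑ k ∈ Finset.range n, (rootsOfHeight A k).card := by
    refine Finset.card_biUnion fun k _ l _ hkl => Finset.disjoint_left.2 fun c hk hl => hkl ?_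
    have := ((mem_rootsOfHeight hA).1 hk).2.2.symm.trans ((mem_rootsOfHeight hA).1 hl).2.2
    omega
  refine ⟨P ∪ P.image Neg.neg, fun c => ?_, ?_⟩
  · rw [Finset.mem_union, hP, hPneg, ← and_or_left]
    exact and_iff_left_of_imp fun h => h.nonneg_or_nonpos hA
  · rw [Finset.card_union_of_disjoint hdisj, Finset.card_image_of_injective _ neg_injective, hcard,
      two_mul]

end Roots

section RootsE7E8

theorem isADE_E₈ : IsADE E₈ where
  isSymm := by decide
  diag_eq_two := by decide
  nonpos i := by fin_cases i <;> decide
  pos c hc := by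
    -- Completing the square along the three arms of the diagram, towards the branch node `3`.
    have key : 60 * (c ⬝ᵥ E₈ *ᵥ c) =
        30 * (2 * c 0 - c 2) ^ 2 + 10 * (3 * c 2 - 2 * c 3) ^ 2 + 30 * (2 * c 1 - c 3) ^ 2 +
        30 * (2 * c 7 - c 6) ^ 2 + 10 * (3 * c 6 - 2 * c 5) ^ 2 + 5 * (4 * c 5 - 3 * c 4) ^ 2 +
        3 * (5 * c 4 - 4 * c 3) ^ 2 + 2 * c 3 ^ 2 := by
      simp [dotProduct, mulVec, Fin.sum_univ_eight, E₈]
      ring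
    by_contra! hle
    obtain ⟨h0, h1, h2, h3, h4, h5, h6, h7⟩ : 2 * c 0 - c 2 = 0 ∧ 3 * c 2 - 2 * c 3 = 0 ∧
        2 * c 1 - c 3 = 0 ∧ 2 * c 7 - c 6 = 0 ∧ 3 * c 6 - 2 * c 5 = 0 ∧ 4 * c 5 - 3 * c 4 = 0 ∧
        5 * c 4 - 4 * c 3 = 0 ∧ c 3 = 0 := by
      refine ⟨?_, ?_, ?_, ?_, ?_, ?_, ?_, ?_⟩ <;>
      exact pow_eq_zero_iff two_ne_zero |>.1 (le_antisymm (by nlinarith) (sq_nonneg _))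
    refine hc (funext fun i => ?_)
    fin_cases i <;> simp <;> omega
  connected := by decide +kernel

theorem E₈_submatrix_castSucc : E₈.submatrix Fin.castSucc Fin.castSucc = E₇ := by
  decide

theorem isADE_E₇ : IsADE E₇ where
  isSymm := by decide
  diag_eq_two := by decide
  nonpos i := by fin_cases i <;> decide
  pos c hc := by
    have h := isADE_E₈.pos (Fin.snoc c 0) fun h => hc <| funext fun i => by
      simpa using congrFun h i.castSucc
    rw [← E₈_submatrix_castSucc]
    simpa only [dotProduct, mulVec, Fin.sum_univ_castSucc (n := 7), Fin.snoc_castSucc,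
      Fin.snoc_last, mul_zero, zero_mul, add_zero, submatrix_apply] using h
  connected := by decide +kernel

set_option maxRecDepth 100000 in
theorem exists_finset_isRoot_E₇ :
    ∃ s : Finset (Fin 7 → ℤ), (∀ c, c ∈ s ↔ IsRoot E₇ c) ∧ s.card = 126 := by
  have hempty : rootsOfHeight E₇ 17 = ∅ := by decide +kernel
  have hcard : ∑ k ∈ Finset.range 17, (rootsOfHeight E₇ k).card = 63 := by decide +kernel
  simpa only [hcard] using exists_finset_isRoot isADE_E₇ hempty

set_option maxRecDepth 100000 in
theorem exists_finset_isRoot_E₈ :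
    ∃ s : Finset (Fin 8 → ℤ), (∀ c, c ∈ s ↔ IsRoot E₈ c) ∧ s.card = 240 := by
  have hempty : rootsOfHeight E₈ 29 = ∅ := by decide +kernel
  have hcard : ∑ k ∈ Finset.range 29, (rootsOfHeight E₈ k).card = 120 := by decide +kernel
  simpa only [hcard] using exists_finset_isRoot isADE_E₈ hempty

end RootsE7E8

/-! ### Primitive vectors for `sl₂`-triples -/

section Sl2

variable {K L M : Type*} [Field K] [CharZero K] [LieRing L] [LieAlgebra K L]
  [AddCommGroup M] [Module K M] [LieRingModule L M] [LieModule K L M] {h e f : L}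

/-- The powers of `e` lie in eigenspaces of `ad h` for distinct eigenvalues. -/
theorem isNilpotent_toEnd_of_lie_eq_smul [FiniteDimensional K M] {c : K} (hc : c ≠ 0)
    (he : ⁅h, e⁆ = c • e) : IsNilpotent (toEnd K L M e) := by
  by_contra hn
  set adH : Module.End K (Module.End K M) :=
    LinearMap.mulLeft K (toEnd K L M h) - LinearMap.mulRight K (toEnd K L M h)
  have lie_pow (n : ℕ) (x : M) : ⁅h, (toEnd K L M e ^ n) x⁆ =
      (toEnd K L M e ^ n) ⁅h, x⁆ + (n * c) • (toEnd K L M e ^ n) x := by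
    induction n with
    | zero => simp
    | succ n ih =>
      rw [pow_succ', Module.End.mul_apply, toEnd_apply_apply, leibniz_lie, he, ih]
      simp only [lie_add, lie_smul, smul_lie, Module.End.mul_apply, toEnd_apply_apply,
        Nat.cast_succ]
      module
  have hasEigenvalue (n : ℕ) : adH.HasEigenvalue (n * c) :=
    Module.End.hasEigenvalue_of_hasEigenvector (x := toEnd K L M e ^ n)
      ⟨Module.End.mem_eigenspace_iff.2 (by ext x; simp [adH, lie_pow]), fun h0 => hn ⟨n, h0⟩⟩
  exact Set.infinite_of_injective_forall_mem (f := fun n : ℕ => (n : K) * c)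
    (fun a b hab => by simpa [hc] using hab) hasEigenvalue (Module.End.finite_hasEigenvalue adH)

theorem lie_toEnd_f_pow_succ (t : IsSl2Triple h e f) (n : ℕ) (x : M) :
    ⁅e, (toEnd K L M f ^ (n + 1)) x⁆ =
      (toEnd K L M f ^ (n + 1)) ⁅e, x⁆ +
        ((n : K) + 1) • (toEnd K L M f ^ n) (⁅h, x⁆ - (n : K) • x) := by
  induction n generalizing x with
  | zero => simp [leibniz_lie e f x, t.lie_e_f, add_comm]
  | succ n ih =>
    rw [pow_succ, Module.End.mul_apply, ih, toEnd_apply_apply, leibniz_lie e f x, leibniz_lie h f x,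
      t.lie_e_f, t.lie_lie_smul_f K]
    simp only [map_add, map_sub, map_smul, pow_succ, Module.End.mul_apply, toEnd_apply_apply,
      Nat.cast_succ, neg_lie, smul_lie, map_neg]
    module

/-- Induction on the nilpotency exponent of `e` at `x`, passing from `x` to `⁅e, x⁆`, reduces this
to the case of a primitive vector. -/
theorem eq_zero_of_toEnd_f_pow_eq_zero (t : IsSl2Triple h e f) {N k : ℕ} {x : M}
    (he : (toEnd K L M e ^ N) x = 0) (hx : ⁅h, x⁆ = (k : K) • x)
    (hf : (toEnd K L M f ^ k) x = 0) : x = 0 := by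
  induction N generalizing k x with
  | zero => simpa using he
  | succ N ih =>
    have hfs (j : ℕ) : (toEnd K L M f ^ (j + k)) x = 0 := by
      rw [pow_add, Module.End.mul_apply, hf, map_zero]
    have hex : ⁅e, x⁆ = 0 := by
      refine ih (k := k + 2) (by simpa [pow_succ] using he) ?_ ?_
      · rw [leibniz_lie, t.lie_h_e_smul K, hx, smul_lie, lie_smul]
        push_cast
        module
      · have := lie_toEnd_f_pow_succ (K := K) t (k + 1) x
        rw [show k + 1 + 1 = 2 + k by ring, hfs 2, lie_zero, hx, ← sub_smul, map_smul,
          show k + 1 = 1 + k by ring, hfs 1, smul_zero, smul_zero, add_zero] at this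
        rw [show k + 2 = 2 + k by ring, ← this]
    by_contra hx0
    exact IsSl2Triple.HasPrimitiveVectorWith.pow_toEnd_f_ne_zero_of_eq_nat
      (t := t) ⟨hx0, hx, hex⟩ rfl le_rfl hf

theorem eq_zero_of_lie_f_eq_zero (t : IsSl2Triple h e f) {N k : ℕ} {x : M}
    (he : (toEnd K L M e ^ N) x = 0) (hx : ⁅h, x⁆ = ((k + 1 : ℕ) : K) • x) (hf : ⁅f, x⁆ = 0) :
    x = 0 :=
  eq_zero_of_toEnd_f_pow_eq_zero t he hx (by simp [pow_succ, hf])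

section FiniteDimensional

variable [FiniteDimensional K M]

theorem isNilpotent_toEnd_e (t : IsSl2Triple h e f) : IsNilpotent (toEnd K L M e) :=
  isNilpotent_toEnd_of_lie_eq_smul two_ne_zero (t.lie_h_e_smul K)

/-- `⁅e, ⁅f, ·⁆⁆` is injective on the space of vectors of weight `k + 2`. -/
theorem exists_lie_e_lie_f_eq (t : IsSl2Triple h e f) {k : ℕ} {x : M}
    (hx : ⁅h, x⁆ = ((k + 2 : ℕ) : K) • x) :
    ∃ y : M, ⁅h, y⁆ = ((k + 2 : ℕ) : K) • y ∧ ⁅e, ⁅f, y⁆⁆ = x := by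
  set V := (toEnd K L M h).eigenspace ((k + 2 : ℕ) : K)
  have mem_V {y : M} : y ∈ V ↔ ⁅h, y⁆ = ((k + 2 : ℕ) : K) • y := Module.End.mem_eigenspace_iff
  have lie_h_lie_f {y : M} (hy : y ∈ V) : ⁅h, ⁅f, y⁆⁆ = (k : K) • ⁅f, y⁆ := by
    rw [leibniz_lie, t.lie_lie_smul_f K, mem_V.1 hy, neg_lie, smul_lie, lie_smul]
    push_cast
    module
  have maps : ∀ y ∈ V, (toEnd K L M e * toEnd K L M f) y ∈ V := fun y hy => mem_V.2 <| by
    rw [Module.End.mul_apply, toEnd_apply_apply, toEnd_apply_apply, leibniz_lie h e,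
      t.lie_h_e_smul K, lie_h_lie_f hy, smul_lie, lie_smul]
    push_cast
    module
  have injective : Function.Injective ((toEnd K L M e * toEnd K L M f).restrict maps) := by
    refine (injective_iff_map_eq_zero _).2 fun ⟨y, hy⟩ hy0 => Subtype.ext ?_
    replace hy0 : ⁅e, ⁅f, y⁆⁆ = 0 := congrArg Subtype.val hy0
    obtain ⟨N, hN⟩ := isNilpotent_toEnd_e (K := K) (M := M) t
    refine eq_zero_of_toEnd_f_pow_eq_zero t (N := N) (by rw [hN, LinearMap.zero_apply])
      (mem_V.1 hy) ?_
    rw [pow_succ, Module.End.mul_apply, toEnd_apply_apply]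
    by_cases hf : ⁅f, y⁆ = 0
    · rw [hf, map_zero]
    · exact IsSl2Triple.HasPrimitiveVectorWith.pow_toEnd_f_eq_zero_of_eq_nat
        (t := t) ⟨hf, lie_h_lie_f hy, hy0⟩ rfl
  obtain ⟨y, hy⟩ := LinearMap.injective_iff_surjective.1 injective ⟨x, mem_V.2 hx⟩
  exact ⟨y, mem_V.1 y.2, congrArg Subtype.val hy⟩

theorem lie_h_sub_smul_eq_zero_of_lie_e_eq_zero (t : IsSl2Triple h e f) {k : ℕ} {x z : M}
    (hz : ⁅h, x⁆ - (k : K) • x = z) (hzk : ⁅h, z⁆ = (k : K) • z) (hx : ⁅e, x⁆ = 0) : z = 0 := by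
  by_contra hz0
  have hez : ⁅e, z⁆ = 0 := by
    have := leibniz_lie h e x
    rw [t.lie_h_e_smul K, smul_lie, hx, lie_zero, smul_zero, zero_add] at this
    rw [← hz, lie_sub, lie_smul, hx, ← this, smul_zero, sub_zero]
  have lie_pow (n : ℕ) : ⁅e, (toEnd K L M f ^ (n + 1)) x⁆ =
      ((n : K) + 1) • (toEnd K L M f ^ n) (((k : K) - n) • x + z) := by
    rw [lie_toEnd_f_pow_succ t, hx, map_zero, zero_add, ← hz]
    congr 2
    module
  have hz' : t.HasPrimitiveVectorWith z (k : K) := ⟨hz0, hzk, hez⟩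
  have pow_z (m : ℕ) : (toEnd K L M f ^ (m + (k + 1))) z = 0 := by
    rw [pow_add, Module.End.mul_apply, hz'.pow_toEnd_f_eq_zero_of_eq_nat rfl, map_zero]
  have descend (m : ℕ) : (toEnd K L M f ^ (m + (k + 1))) x = 0 →
      (toEnd K L M f ^ (k + 1)) x = 0 := by
    induction m with
    | zero => exact fun h0 => by simpa using h0
    | succ m ih =>
      refine fun h0 => ih ?_
      have := lie_pow (m + (k + 1))
      rw [← add_right_comm, h0, lie_zero, map_add, pow_z, add_zero, map_smul, smul_smul, eq_comm,
        smul_eq_zero] at this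
      refine this.resolve_left (mul_ne_zero (Nat.cast_add_one_ne_zero _) ?_)
      rw [sub_ne_zero, Nat.cast_injective.ne_iff]
      lia
  obtain ⟨N, hN⟩ := isNilpotent_toEnd_e (K := K) (M := M) t.symm
  have := lie_pow k
  rw [descend N (by rw [pow_add, hN, zero_mul, LinearMap.zero_apply]), lie_zero, sub_self,
    zero_smul, zero_add, eq_comm, smul_eq_zero] at this
  exact hz'.pow_toEnd_f_ne_zero_of_eq_nat rfl le_rfl
    (this.resolve_left (Nat.cast_add_one_ne_zero k))

/-- Induction on the nilpotency exponent of `e` at `x`: by the induction hypothesis `⁅e, x⁆` is an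
eigenvector, so `x` can be corrected by some `⁅f, y⁆` to be killed by `e`. -/
theorem lie_h_sub_smul_eq_zero (t : IsSl2Triple h e f) {k : ℕ} {x z : M}
    (hz : ⁅h, x⁆ - (k : K) • x = z) (hzk : ⁅h, z⁆ = (k : K) • z) : z = 0 := by
  obtain ⟨N, hN⟩ := isNilpotent_toEnd_e (K := K) (M := M) t
  replace hN : (toEnd K L M e ^ N) x = 0 := by rw [hN, LinearMap.zero_apply]
  induction N generalizing k x z with
  | zero => rw [← hz, show x = 0 by simpa using hN, lie_zero, smul_zero, sub_zero]
  | succ N ih =>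
    have lie_e {w : M} : ⁅h, ⁅e, w⁆⁆ = ⁅e, ⁅h, w⁆⁆ + (2 : K) • ⁅e, w⁆ := by
      rw [leibniz_lie, t.lie_h_e_smul K, smul_lie, add_comm]
    have hex : ⁅e, z⁆ = 0 := by
      refine ih (k := k + 2) (x := ⁅e, x⁆) ?_ ?_ (by simpa [pow_succ] using hN)
      · rw [lie_e, ← hz, lie_sub, lie_smul]
        push_cast
        module
      · rw [lie_e, hzk, lie_smul]
        push_cast
        module
    obtain ⟨y, hy, hyx⟩ := exists_lie_e_lie_f_eq (K := K) t (k := k) (x := ⁅e, x⁆) <| by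
      rw [lie_e, show ⁅h, x⁆ = z + (k : K) • x by rw [← hz]; abel, lie_add, hex, lie_smul]
      push_cast
      module
    refine lie_h_sub_smul_eq_zero_of_lie_e_eq_zero t (x := x - ⁅f, y⁆) ?_ hzk ?_
    · rw [lie_sub, leibniz_lie h f, t.lie_lie_smul_f K, hy, ← hz, neg_lie, smul_lie, lie_smul]
      push_cast
      module
    · rw [lie_sub, hyx, sub_self]

end FiniteDimensional

end Sl2

/-! ### Chevalley systems -/

section Chevalley

variable {ι : Type*} {A : Matrix ι ι ℤ} {L : Type*} [LieRing L]

/-- Nonzero elements `h i`, `e i`, `f i` of a Lie algebra satisfying the relations of the Serre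
presentation for `A`, except possibly the two families of `ad`-nilpotency relations. -/
structure ChevalleySystem (A : Matrix ι ι ℤ) (L : Type*) [LieRing L] where
  h : ι → L
  e : ι → L
  f : ι → L
  isSl2Triple : ∀ i, IsSl2Triple (h i) (e i) (f i)
  lie_h_h : ∀ i j, ⁅h i, h j⁆ = 0
  lie_e_f_of_ne : ∀ i j, i ≠ j → ⁅e i, f j⁆ = 0
  lie_h_e : ∀ i j, ⁅h i, e j⁆ = A i j • e j
  lie_h_f : ∀ i j, ⁅h i, f j⁆ = -(A i j • f j)

namespace ChevalleySystem

/-- The image of `C` under the Chevalley involution. -/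
def swap (C : ChevalleySystem A L) : ChevalleySystem A L where
  h i := -C.h i
  e := C.f
  f := C.e
  isSl2Triple i := (C.isSl2Triple i).symm
  lie_h_h i j := by rw [neg_lie, lie_neg, C.lie_h_h, neg_zero, neg_zero]
  lie_e_f_of_ne i j hij := by rw [← lie_skew, C.lie_e_f_of_ne j i hij.symm, neg_zero]
  lie_h_e i j := by rw [neg_lie, C.lie_h_f, neg_neg]
  lie_h_f i j := by rw [neg_lie, C.lie_h_e]

/-- The Chevalley system of type a principal submatrix of `A`, obtained by selecting indices. -/
def submatrix {κ : Type*} (C : ChevalleySystem A L) (σ : κ ↪ ι) :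
    ChevalleySystem (A.submatrix σ σ) L where
  h i := C.h (σ i)
  e i := C.e (σ i)
  f i := C.f (σ i)
  isSl2Triple i := C.isSl2Triple (σ i)
  lie_h_h i j := C.lie_h_h (σ i) (σ j)
  lie_e_f_of_ne i j hij := C.lie_e_f_of_ne (σ i) (σ j) (σ.injective.ne hij)
  lie_h_e i j := C.lie_h_e (σ i) (σ j)
  lie_h_f i j := C.lie_h_f (σ i) (σ j)

theorem lie_e_f (C : ChevalleySystem A L) (i : ι) : ⁅C.e i, C.f i⁆ = C.h i :=
  (C.isSl2Triple i).lie_e_f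

theorem lie_f_e_of_ne (C : ChevalleySystem A L) {i j : ι} (hij : i ≠ j) : ⁅C.f i, C.e j⁆ = 0 :=
  C.swap.lie_e_f_of_ne i j hij

variable {K : Type*} [Field K] [LieAlgebra K L]

/-- The image of a Chevalley system under an injective homomorphism. -/
def map {L' : Type*} [LieRing L'] [LieAlgebra K L'] (C : ChevalleySystem A L) (φ : L →ₗ⁅K⁆ L')
    (hφ : Function.Injective φ) : ChevalleySystem A L' where
  h i := φ (C.h i)
  e i := φ (C.e i)
  f i := φ (C.f i)
  isSl2Triple i :=
    { h_ne_zero := (map_ne_zero_iff φ hφ).2 (C.isSl2Triple i).h_ne_zero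
      lie_e_f := by rw [← LieHom.map_lie, C.lie_e_f]
      lie_h_e_nsmul := by rw [← LieHom.map_lie, (C.isSl2Triple i).lie_h_e_nsmul, map_nsmul]
      lie_h_f_nsmul := by rw [← LieHom.map_lie, (C.isSl2Triple i).lie_h_f_nsmul, map_neg,
        map_nsmul] }
  lie_h_h i j := by rw [← LieHom.map_lie, C.lie_h_h, map_zero]
  lie_e_f_of_ne i j hij := by rw [← LieHom.map_lie, C.lie_e_f_of_ne i j hij, map_zero]
  lie_h_e i j := by rw [← LieHom.map_lie, C.lie_h_e, map_zsmul]
  lie_h_f i j := by rw [← LieHom.map_lie, C.lie_h_f, map_neg, map_zsmul]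

variable (K) in
/-- All `ad (e i)` and `ad (f i)` are locally nilpotent. -/
def IsLocallyNilpotent (C : ChevalleySystem A L) : Prop :=
  ∀ i, LieSubalgebra.engel K (C.e i) = ⊤ ∧ LieSubalgebra.engel K (C.f i) = ⊤

theorem IsLocallyNilpotent.swap {C : ChevalleySystem A L} (hC : C.IsLocallyNilpotent K) :
    C.swap.IsLocallyNilpotent K := fun i => (hC i).symm

theorem IsLocallyNilpotent.exists_ad_e_pow_eq_zero {C : ChevalleySystem A L}
    (hC : C.IsLocallyNilpotent K) (i : ι) (x : L) : ∃ n, (ad K L (C.e i) ^ n) x = 0 :=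
  (LieSubalgebra.mem_engel_iff K _ _).1 ((hC i).1 ▸ LieSubalgebra.mem_top x)

variable (K) in
/-- The space of vectors of weight `χ` for the commuting elements `h i`. -/
def weightSpace (C : ChevalleySystem A L) (χ : ι → ℤ) : Submodule K L :=
  ⨅ i, (ad K L (C.h i)).eigenspace (χ i : K)

theorem mem_weightSpace (C : ChevalleySystem A L) {χ : ι → ℤ} {x : L} :
    x ∈ C.weightSpace K χ ↔ ∀ i, ⁅C.h i, x⁆ = χ i • x := by
  simp [weightSpace, Submodule.mem_iInf, Int.cast_smul_eq_zsmul]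

theorem weightSpace_swap (C : ChevalleySystem A L) (χ : ι → ℤ) :
    C.swap.weightSpace K χ = C.weightSpace K (-χ) := by
  ext x
  simp only [mem_weightSpace, swap, neg_lie, Pi.neg_apply, neg_smul, neg_eq_iff_eq_neg]

theorem h_mem_weightSpace (C : ChevalleySystem A L) (i : ι) : C.h i ∈ C.weightSpace K 0 :=
  C.mem_weightSpace.2 fun j => by simp [C.lie_h_h]

theorem e_mem_weightSpace (C : ChevalleySystem A L) (i : ι) : C.e i ∈ C.weightSpace K (A.col i) :=
  C.mem_weightSpace.2 fun j => C.lie_h_e j i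

theorem f_mem_weightSpace (C : ChevalleySystem A L) (i : ι) : C.f i ∈ C.weightSpace K (-A.col i) :=
  C.weightSpace_swap (K := K) (A.col i) ▸ C.swap.e_mem_weightSpace i

theorem lie_mem_weightSpace (C : ChevalleySystem A L) {χ ψ : ι → ℤ} {x y : L}
    (hx : x ∈ C.weightSpace K χ) (hy : y ∈ C.weightSpace K ψ) :
    ⁅x, y⁆ ∈ C.weightSpace K (χ + ψ) := by
  rw [mem_weightSpace] at *
  intro i
  rw [leibniz_lie, hx, hy, smul_lie, lie_smul, Pi.add_apply, add_smul]

theorem ad_e_pow_mem_weightSpace (C : ChevalleySystem A L) {χ : ι → ℤ} {x : L}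
    (hx : x ∈ C.weightSpace K χ) (i : ι) (k : ℕ) :
    (ad K L (C.e i) ^ k) x ∈ C.weightSpace K (χ + k • A.col i) := by
  induction k with
  | zero => simpa using hx
  | succ k ih =>
    rw [pow_succ', Module.End.mul_apply, ad_apply, succ_nsmul', add_left_comm]
    exact C.lie_mem_weightSpace (C.e_mem_weightSpace i) ih

theorem ad_e_pow_three_f (C : ChevalleySystem A L) (i j : ι) :
    (ad K L (C.e i) ^ 3) (C.f j) = 0 := by
  obtain rfl | hij := eq_or_ne i j
  · have lie_e_h : ⁅C.e i, C.h i⁆ = -(A i i • C.e i) := by rw [← lie_skew, C.lie_h_e]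
    simp [pow_succ, C.lie_e_f, lie_e_h]
  · simp [pow_succ, C.lie_e_f_of_ne i j hij]

variable (K) in
/-- The span of the `h i`. -/
def cartan (C : ChevalleySystem A L) : Submodule K L := Submodule.span K (Set.range C.h)

theorem cartan_swap (C : ChevalleySystem A L) : C.swap.cartan K = C.cartan K := by
  have : Set.range C.swap.h = -Set.range C.h := by
    ext x
    simp [swap, neg_eq_iff_eq_neg]
  rw [cartan, this, Submodule.span_neg, cartan]

variable [CharZero K]

theorem e_ne_zero (C : ChevalleySystem A L) (i : ι) : C.e i ≠ 0 := fun he =>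
  (C.isSl2Triple i).h_ne_zero (by rw [← C.lie_e_f, he, zero_lie])

theorem diag_eq_two (K : Type*) [Field K] [CharZero K] [LieAlgebra K L] (C : ChevalleySystem A L)
    (i : ι) : A i i = 2 := by
  have h := C.lie_h_e i i
  rw [(C.isSl2Triple i).lie_h_e_smul K, ← Int.cast_smul_eq_zsmul K] at h
  exact_mod_cast (smul_left_injective K (C.e_ne_zero i) h).symm

theorem isLocallyNilpotent [FiniteDimensional K L] (C : ChevalleySystem A L) :
    C.IsLocallyNilpotent K := by
  have engel_eq_top {h e f : L} (t : IsSl2Triple h e f) : LieSubalgebra.engel K e = ⊤ := by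
    obtain ⟨n, hn⟩ := isNilpotent_toEnd_e (K := K) (M := L) t
    exact eq_top_iff.2 fun x _ => (LieSubalgebra.mem_engel_iff K _ _).2
      ⟨n, LinearMap.congr_fun hn x⟩
  exact fun i => ⟨engel_eq_top (C.isSl2Triple i), engel_eq_top (C.isSl2Triple i).symm⟩

theorem iSupIndep_weightSpace (C : ChevalleySystem A L) : iSupIndep (C.weightSpace K) := by
  have commute (i j : ι) : Commute (ad K L (C.h i)) (ad K L (C.h j)) :=
    LinearMap.ext fun x => by simp [leibniz_lie (C.h i) (C.h j) x, C.lie_h_h]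
  have h := (Module.End.independent_iInf_maxGenEigenspace_of_forall_mapsTo
    (fun i => ad K L (C.h i))
    fun i j φ => Module.End.mapsTo_maxGenEigenspace_of_comm (commute j i) φ).mono
    (t := fun χ : ι → K => ⨅ i, (ad K L (C.h i)).eigenspace (χ i))
    fun χ => iInf_mono fun i => (Module.End.genEigenspace _ (χ i)).mono le_top
  exact h.comp (f := fun (χ : ι → ℤ) i => (χ i : K)) (Int.cast_injective.comp_left)

theorem eq_of_mem_weightSpace (C : ChevalleySystem A L) {χ ψ : ι → ℤ} {x : L} (hx : x ≠ 0)
    (hχ : x ∈ C.weightSpace K χ) (hψ : x ∈ C.weightSpace K ψ) : χ = ψ := by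
  by_contra h
  exact hx (Submodule.disjoint_def.1 (C.iSupIndep_weightSpace.pairwiseDisjoint h) x hχ hψ)

theorem weightSpace_le_span_inter (C : ChevalleySystem A L) {X : Set L}
    (hX : Submodule.span K X = ⊤) (hXw : ∀ x ∈ X, ∃ χ, x ∈ C.weightSpace K χ) (ψ : ι → ℤ) :
    C.weightSpace K ψ ≤ Submodule.span K (X ∩ C.weightSpace K ψ) := by
  intro y hy
  obtain ⟨a, ha, b, hb, rfl⟩ : ∃ a ∈ Submodule.span K (X ∩ C.weightSpace K ψ),
      ∃ b ∈ Submodule.span K (X \ C.weightSpace K ψ), a + b = y := by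
    rw [← Submodule.mem_sup, ← Submodule.span_union, Set.inter_union_sdiff, hX]
    exact Submodule.mem_top
  have hbψ : b ∈ C.weightSpace K ψ := by
    simpa using sub_mem hy (Submodule.span_le.2 Set.inter_subset_right ha)
  have hb' : b ∈ ⨆ χ, ⨆ (_ : χ ≠ ψ), C.weightSpace K χ := by
    suffices Submodule.span K (X \ C.weightSpace K ψ) ≤ ⨆ χ, ⨆ (_ : χ ≠ ψ), C.weightSpace K χ from
      this hb
    refine Submodule.span_le.2 fun x ⟨hx, hxψ⟩ => ?_
    obtain ⟨χ, hχ⟩ := hXw x hx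
    exact Submodule.mem_iSup_of_mem χ
      (Submodule.mem_iSup_of_mem (fun h => hxψ (h ▸ hχ)) hχ)
  rwa [Submodule.disjoint_def.1 (C.iSupIndep_weightSpace ψ) b hbψ hb', add_zero]

/-- A power of `ad (e i)` maps the weight space to the reflected one, injectively by
`sl₂`-theory. -/
theorem exists_reflection_of_nonpos {C : ChevalleySystem A L} (hC : C.IsLocallyNilpotent K)
    {i : ι} {χ : ι → ℤ} {k : ℕ} (hk : χ i = -k) :
    ∃ T : Module.End K L, (∀ x ∈ C.weightSpace K χ, T x ∈ C.weightSpace K (χ - χ i • A.col i)) ∧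
      (∀ x ∈ C.weightSpace K χ, T x = 0 → x = 0) ∧
      ∀ (I : LieIdeal K L) (x : L), x ∈ I → T x ∈ I := by
  refine ⟨ad K L (C.e i) ^ k, fun x hx => ?_, fun x hx h0 => ?_, fun I x hx => ?_⟩
  · simpa [hk] using C.ad_e_pow_mem_weightSpace hx i k
  · obtain ⟨N, hN⟩ := hC.swap.exists_ad_e_pow_eq_zero i x
    refine eq_zero_of_toEnd_f_pow_eq_zero (C.isSl2Triple i).symm hN (k := k) ?_ h0
    rw [neg_lie, C.mem_weightSpace.1 hx i, hk, neg_smul, neg_neg, natCast_zsmul,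
      Nat.cast_smul_eq_nsmul]
  · clear hk
    induction k with
    | zero => simpa using hx
    | succ k ih =>
      rw [pow_succ', Module.End.mul_apply, ad_apply]
      exact I.lie_mem ih

theorem exists_reflection {C : ChevalleySystem A L} (hC : C.IsLocallyNilpotent K) (i : ι)
    (χ : ι → ℤ) :
    ∃ T : Module.End K L, (∀ x ∈ C.weightSpace K χ, T x ∈ C.weightSpace K (χ - χ i • A.col i)) ∧
      (∀ x ∈ C.weightSpace K χ, T x = 0 → x = 0) ∧
      ∀ (I : LieIdeal K L) (x : L), x ∈ I → T x ∈ I := by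
  obtain ⟨k, hk | hk⟩ := Int.eq_nat_or_neg (χ i)
  · have := exists_reflection_of_nonpos hC.swap (χ := -χ) (i := i) (k := k) (by simp [hk])
    simpa only [weightSpace_swap, neg_sub', neg_neg, Pi.neg_apply, neg_smul] using this
  · exact exists_reflection_of_nonpos hC hk

section

variable [Fintype ι] [DecidableEq ι]

theorem exists_simpleReflection {C : ChevalleySystem A L} (hC : C.IsLocallyNilpotent K) (i : ι)
    (c : ι → ℤ) :
    ∃ T : Module.End K L,
      (∀ x ∈ C.weightSpace K (A *ᵥ c), T x ∈ C.weightSpace K (A *ᵥ simpleReflection A i c)) ∧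
      (∀ x ∈ C.weightSpace K (A *ᵥ c), T x = 0 → x = 0) ∧
      ∀ (I : LieIdeal K L) (x : L), x ∈ I → T x ∈ I := by
  rw [mulVec_simpleReflection]
  exact exists_reflection hC i _

theorem rank_weightSpace_le_rank_weightSpace_simpleReflection {C : ChevalleySystem A L}
    (hC : C.IsLocallyNilpotent K) (i : ι) (c : ι → ℤ) :
    Module.rank K (C.weightSpace K (A *ᵥ c)) ≤
      Module.rank K (C.weightSpace K (A *ᵥ simpleReflection A i c)) := by
  obtain ⟨T, hT, hinj, -⟩ := exists_simpleReflection hC i c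
  exact LinearMap.rank_le_of_injective (T.restrict hT) <| (injective_iff_map_eq_zero _).2
    fun x hx => Subtype.ext (hinj x x.2 (congrArg Subtype.val hx))

theorem rank_weightSpace_simpleReflection {C : ChevalleySystem A L}
    (hC : C.IsLocallyNilpotent K) (i : ι) (c : ι → ℤ) :
    Module.rank K (C.weightSpace K (A *ᵥ simpleReflection A i c)) =
      Module.rank K (C.weightSpace K (A *ᵥ c)) := by
  refine le_antisymm ?_ (rank_weightSpace_le_rank_weightSpace_simpleReflection hC i c)
  conv_rhs => rw [← simpleReflection_simpleReflection (diag_eq_two K C) i c]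
  exact rank_weightSpace_le_rank_weightSpace_simpleReflection hC i _

end

theorem ad_e_pow_lie_e_e_eq_zero [FiniteDimensional K L] (C : ChevalleySystem A L)
    (hA : ∀ i j, i ≠ j → A i j ≤ 0) (i j : ι) :
    (ad K L (C.e i) ^ (-A i j).toNat) ⁅C.e i, C.e j⁆ = 0 := by
  obtain rfl | hij := eq_or_ne i j
  · simp
  obtain ⟨a, ha⟩ := Int.eq_ofNat_of_zero_le (neg_nonneg.2 (hA i j hij))
  rw [ha, Int.toNat_natCast, ← ad_apply (R := K), ← Module.End.mul_apply, ← pow_succ]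
  set x := (ad K L (C.e i) ^ (a + 1)) (C.e j)
  obtain ⟨N, hN⟩ := C.isLocallyNilpotent.exists_ad_e_pow_eq_zero (K := K) i x
  refine eq_zero_of_lie_f_eq_zero (C.isSl2Triple i) hN (k := a + 1) ?_ ?_
  · have := C.ad_e_pow_mem_weightSpace (C.e_mem_weightSpace (K := K) j) i (a + 1)
    rw [C.mem_weightSpace.1 this i, ← Int.cast_smul_eq_zsmul K]
    congr 1
    simp only [Pi.add_apply, Pi.smul_apply, col_apply, diag_eq_two K C, neg_eq_iff_eq_neg.1 ha]
    rw [nsmul_eq_mul]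
    push_cast
    ring
  · have := lie_toEnd_f_pow_succ (K := K) (C.isSl2Triple i).symm a (C.e j)
    rw [C.lie_f_e_of_ne hij, map_zero, zero_add, neg_lie, C.lie_h_e, ← neg_smul, ha,
      natCast_zsmul, Nat.cast_smul_eq_nsmul, sub_self, map_zero, smul_zero] at this
    exact this

end ChevalleySystem

end Chevalley

/-! ### The Serre presentation -/

section SerrePresentation

variable {R : Type*} [CommRing R] {ι : Type*} [DecidableEq ι] {A : Matrix ι ι ℤ}
  {L L' : Type*} [LieRing L] [LieAlgebra R L] [LieRing L'] [LieAlgebra R L']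

theorem map_ad_pow (φ : L →ₗ⁅R⁆ L') (x y : L) (k : ℕ) :
    φ ((ad R L x ^ k) y) = (ad R L' (φ x) ^ k) (φ y) := by
  induction k with
  | zero => simp
  | succ k ih => simp [pow_succ', ih]

variable (R A) in
/-- The quotient map from the free Lie algebra onto the Serre presentation. -/
noncomputable def serreMk : FreeLieAlgebra R (Generators ι) →ₗ⁅R⁆ A.ToLieAlgebra R where
  toLinearMap := (LieSubmodule.Quotient.mk' (Relations.toIdeal R A)).toLinearMap
  map_lie' := rfl

theorem serreMk_surjective : Function.Surjective (serreMk R A) :=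
  LieSubmodule.Quotient.surjective_mk' _

theorem serreMk_eq_zero {x : FreeLieAlgebra R (Generators ι)} (hx : x ∈ Relations.toSet R A) :
    serreMk R A x = 0 :=
  LieSubmodule.Quotient.mk_eq_zero'.2 (LieSubmodule.subset_lieSpan hx)

variable (R A) in
/-- The defining generators of the Serre presentation. -/
noncomputable def serreGen (g : Generators ι) : A.ToLieAlgebra R :=
  serreMk R A (FreeLieAlgebra.of R g)

theorem serreGen_lie_H_H (i j : ι) : ⁅serreGen R A (.H i), serreGen R A (.H j)⁆ = 0 := by
  have := serreMk_eq_zero (R := R) (A := A) (x := Relations.HH R (i, j)) (by simp [Relations.toSet])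
  simpa [serreGen, Relations.HH] using this

theorem serreGen_lie_E_F (i : ι) :
    ⁅serreGen R A (.E i), serreGen R A (.F i)⁆ = serreGen R A (.H i) := by
  have := serreMk_eq_zero (R := R) (A := A) (x := Relations.EF R (i, i)) (by simp [Relations.toSet])
  simpa [serreGen, Relations.EF, sub_eq_zero] using this

theorem serreGen_lie_E_F_of_ne {i j : ι} (hij : i ≠ j) :
    ⁅serreGen R A (.E i), serreGen R A (.F j)⁆ = 0 := by
  have := serreMk_eq_zero (R := R) (A := A) (x := Relations.EF R (i, j)) (by simp [Relations.toSet])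
  simpa [serreGen, Relations.EF, hij] using this

theorem serreGen_lie_H_E (i j : ι) :
    ⁅serreGen R A (.H i), serreGen R A (.E j)⁆ = A i j • serreGen R A (.E j) := by
  have := serreMk_eq_zero (R := R) (A := A) (x := Relations.HE R A (i, j))
    (by simp [Relations.toSet])
  simpa [serreGen, Relations.HE, sub_eq_zero] using this

theorem serreGen_lie_H_F (i j : ι) :
    ⁅serreGen R A (.H i), serreGen R A (.F j)⁆ = -(A i j • serreGen R A (.F j)) := by
  have := serreMk_eq_zero (R := R) (A := A) (x := Relations.HF R A (i, j))
    (by simp [Relations.toSet])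
  simpa [serreGen, Relations.HF, add_eq_zero_iff_eq_neg] using this

theorem serreGen_ad_E_pow (i j : ι) : (ad R _ (serreGen R A (.E i)) ^ (-A i j).toNat)
    ⁅serreGen R A (.E i), serreGen R A (.E j)⁆ = 0 := by
  have := serreMk_eq_zero (R := R) (A := A) (x := Relations.adE R A (i, j))
    (by simp [Relations.toSet])
  simpa [serreGen, Relations.adE, map_ad_pow] using this

theorem serreGen_ad_F_pow (i j : ι) : (ad R _ (serreGen R A (.F i)) ^ (-A i j).toNat)
    ⁅serreGen R A (.F i), serreGen R A (.F j)⁆ = 0 := by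
  have := serreMk_eq_zero (R := R) (A := A) (x := Relations.adF R A (i, j))
    (by simp [Relations.toSet])
  simpa [serreGen, Relations.adF, map_ad_pow] using this

theorem eq_top_of_serreGen_mem {S : LieSubalgebra R (A.ToLieAlgebra R)}
    (hE : ∀ i, serreGen R A (.E i) ∈ S) (hF : ∀ i, serreGen R A (.F i) ∈ S) : S = ⊤ := by
  have mem (g : Generators ι) : serreGen R A g ∈ S := by
    obtain i | i | i := g
    · exact serreGen_lie_E_F (R := R) (A := A) i ▸ S.lie_mem (hE i) (hF i)
    · exact hE i
    · exact hF i
  have h : S.incl.comp (FreeLieAlgebra.lift R fun g => ⟨serreGen R A g, mem g⟩) = serreMk R A :=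
    FreeLieAlgebra.hom_ext fun g => by simp [serreGen]
  refine eq_top_iff.2 fun x _ => ?_
  obtain ⟨y, rfl⟩ := serreMk_surjective x
  rw [← h]
  exact Subtype.property _

/-- The normaliser of `P` inside `P` is a subalgebra. -/
theorem eq_top_of_lie_serreGen_mem {P : Submodule R (A.ToLieAlgebra R)}
    (hE : ∀ i, serreGen R A (.E i) ∈ P) (hF : ∀ i, serreGen R A (.F i) ∈ P)
    (hPE : ∀ i, ∀ x ∈ P, ⁅serreGen R A (.E i), x⁆ ∈ P)
    (hPF : ∀ i, ∀ x ∈ P, ⁅serreGen R A (.F i), x⁆ ∈ P) : P = ⊤ := by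
  let S : LieSubalgebra R (A.ToLieAlgebra R) :=
    { carrier := {x | x ∈ P ∧ ∀ y ∈ P, ⁅x, y⁆ ∈ P}
      add_mem' := fun {a b} ha hb => ⟨P.add_mem ha.1 hb.1, fun y hy => by
        rw [add_lie]; exact P.add_mem (ha.2 y hy) (hb.2 y hy)⟩
      zero_mem' := ⟨P.zero_mem, fun y _ => by simp⟩
      smul_mem' := fun c x hx => ⟨P.smul_mem c hx.1, fun y hy => by
        rw [smul_lie]; exact P.smul_mem c (hx.2 y hy)⟩
      lie_mem' := fun {a b} ha hb => ⟨ha.2 b hb.1, fun y hy => by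
        rw [lie_lie]; exact P.sub_mem (ha.2 _ (hb.2 y hy)) (hb.2 _ (ha.2 y hy))⟩ }
  have hS : S = ⊤ := eq_top_of_serreGen_mem (fun i => ⟨hE i, hPE i⟩) fun i => ⟨hF i, hPF i⟩
  exact eq_top_iff.2 fun x _ => (hS ▸ LieSubalgebra.mem_top x : x ∈ S).1

theorem serre_hom_ext {φ ψ : A.ToLieAlgebra R →ₗ⁅R⁆ L}
    (hE : ∀ i, φ (serreGen R A (.E i)) = ψ (serreGen R A (.E i)))
    (hF : ∀ i, φ (serreGen R A (.F i)) = ψ (serreGen R A (.F i))) : φ = ψ := by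
  have h : φ.comp (serreMk R A) = ψ.comp (serreMk R A) := by
    refine FreeLieAlgebra.hom_ext ?_
    rintro (i | i | i)
    · change φ (serreGen R A (.H i)) = ψ (serreGen R A (.H i))
      rw [← serreGen_lie_E_F, LieHom.map_lie, LieHom.map_lie, hE, hF]
    · exact hE i
    · exact hF i
  ext x
  obtain ⟨y, rfl⟩ := serreMk_surjective x
  exact LieHom.congr_fun h y

theorem exists_serre_lift (Φ : FreeLieAlgebra R (Generators ι) →ₗ⁅R⁆ L)
    (hΦ : ∀ x ∈ Relations.toSet R A, Φ x = 0) :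
    ∃ φ : A.ToLieAlgebra R →ₗ⁅R⁆ L, ∀ g, φ (serreGen R A g) = Φ (FreeLieAlgebra.of R g) := by
  have hker : Relations.toIdeal R A ≤ Φ.ker := LieSubmodule.lieSpan_le.2 fun x hx =>
    Φ.mem_ker.2 (hΦ x hx)
  let φ : A.ToLieAlgebra R →ₗ[R] L := (Relations.toIdeal R A).toSubmodule.liftQ Φ.toLinearMap hker
  refine ⟨⟨φ, fun {x y} => ?_⟩, fun g => rfl⟩
  obtain ⟨x, rfl⟩ := serreMk_surjective x
  obtain ⟨y, rfl⟩ := serreMk_surjective y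
  exact Φ.map_lie x y

end SerrePresentation

namespace ChevalleySystem

open LieSubalgebra (mem_engel_iff)

variable {K : Type*} [Field K] [CharZero K] {ι : Type*} [DecidableEq ι] {A : Matrix ι ι ℤ}
  {L : Type*} [LieRing L] [LieAlgebra K L]

theorem exists_hom [FiniteDimensional K L] (C : ChevalleySystem A L)
    (hA : ∀ i j, i ≠ j → A i j ≤ 0) : ∃ φ : A.ToLieAlgebra K →ₗ⁅K⁆ L,
      (∀ i, φ (serreGen K A (.E i)) = C.e i) ∧ ∀ i, φ (serreGen K A (.F i)) = C.f i := by
  let Φ : FreeLieAlgebra K (Generators ι) →ₗ⁅K⁆ L := FreeLieAlgebra.lift K fun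
    | .H i => C.h i
    | .E i => C.e i
    | .F i => C.f i
  have hH (i : ι) : Φ (FreeLieAlgebra.of K (.H i)) = C.h i := FreeLieAlgebra.lift_of_apply ..
  have hE (i : ι) : Φ (FreeLieAlgebra.of K (.E i)) = C.e i := FreeLieAlgebra.lift_of_apply ..
  have hF (i : ι) : Φ (FreeLieAlgebra.of K (.F i)) = C.f i := FreeLieAlgebra.lift_of_apply ..
  obtain ⟨φ, hφ⟩ := exists_serre_lift (A := A) Φ <| by
    rintro x (((((⟨⟨i, j⟩, rfl⟩ | ⟨⟨i, j⟩, rfl⟩) | ⟨⟨i, j⟩, rfl⟩) | ⟨⟨i, j⟩, rfl⟩) |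
      ⟨⟨i, j⟩, rfl⟩) | ⟨⟨i, j⟩, rfl⟩)
    · simp [Relations.HH, hH, C.lie_h_h]
    · obtain rfl | hij := eq_or_ne i j
      · simp [Relations.EF, hH, hE, hF, C.lie_e_f]
      · simp [Relations.EF, hE, hF, hij, C.lie_e_f_of_ne]
    · simp [Relations.HE, hE, hH, C.lie_h_e]
    · simp [Relations.HF, hF, hH, C.lie_h_f]
    · simpa [Relations.adE, map_ad_pow, hE] using C.ad_e_pow_lie_e_e_eq_zero (K := K) hA i j
    · simpa [Relations.adF, map_ad_pow, hF, swap] using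
        C.swap.ad_e_pow_lie_e_e_eq_zero (K := K) hA i j
  exact ⟨φ, fun i => (hφ _).trans (hE i), fun i => (hφ _).trans (hF i)⟩

theorem serreGen_H_ne_zero [Fintype ι] (hA : IsADE A) [Nontrivial (A.ToLieAlgebra K)] (i : ι) :
    serreGen K A (.H i) ≠ 0 := by
  have e_eq_zero {i j : ι} (hij : A i j ≠ 0) (h0 : serreGen K A (.H i) = 0) :
      serreGen K A (.E j) = 0 := by
    simpa [h0, ← Int.cast_smul_eq_zsmul K, hij, eq_comm (a := (0 : A.ToLieAlgebra K))] using
      serreGen_lie_H_E (R := K) (A := A) i j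
  have f_eq_zero {i j : ι} (hij : A i j ≠ 0) (h0 : serreGen K A (.H i) = 0) :
      serreGen K A (.F j) = 0 := by
    simpa [h0, ← Int.cast_smul_eq_zsmul K, hij] using serreGen_lie_H_F (R := K) (A := A) i j
  have diag_ne_zero (i : ι) : A i i ≠ 0 := by simp [hA.diag_eq_two]
  intro hi
  have h_eq_zero (j : ι) : serreGen K A (.H j) = 0 := by
    refine hA.forall_of_apply (p := fun j => serreGen K A (.H j) = 0) (fun i j hij h0 => ?_) hi j
    rw [← serreGen_lie_E_F, e_eq_zero hij h0, zero_lie]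
  have bot_eq_top : (⊥ : LieSubalgebra K (A.ToLieAlgebra K)) = ⊤ := eq_top_of_serreGen_mem
    (fun j => e_eq_zero (diag_ne_zero j) (h_eq_zero j))
    fun j => f_eq_zero (diag_ne_zero j) (h_eq_zero j)
  obtain ⟨x, hx⟩ := exists_ne (0 : A.ToLieAlgebra K)
  exact hx ((LieSubalgebra.mem_bot x).1 (bot_eq_top ▸ LieSubalgebra.mem_top x))

variable [Fintype ι]

variable (K) in
/-- The defining generators of the Serre presentation as a Chevalley system. -/
noncomputable def std (hA : IsADE A) [Nontrivial (A.ToLieAlgebra K)] :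
    ChevalleySystem A (A.ToLieAlgebra K) where
  h i := serreGen K A (.H i)
  e i := serreGen K A (.E i)
  f i := serreGen K A (.F i)
  isSl2Triple i :=
    { h_ne_zero := serreGen_H_ne_zero hA i
      lie_e_f := serreGen_lie_E_F i
      lie_h_e_nsmul := by
        rw [serreGen_lie_H_E, hA.diag_eq_two, ← natCast_zsmul, Nat.cast_ofNat]
      lie_h_f_nsmul := by
        rw [serreGen_lie_H_F, hA.diag_eq_two, ← natCast_zsmul, Nat.cast_ofNat] }
  lie_h_h := serreGen_lie_H_H
  lie_e_f_of_ne _ _ := serreGen_lie_E_F_of_ne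
  lie_h_e := serreGen_lie_H_E
  lie_h_f := serreGen_lie_H_F

theorem std_isLocallyNilpotent (hA : IsADE A) [Nontrivial (A.ToLieAlgebra K)] :
    (std K hA).IsLocallyNilpotent K := by
  refine fun i => ⟨eq_top_of_serreGen_mem (fun j => (mem_engel_iff ..).2 ?_)
    fun j => (mem_engel_iff ..).2 ?_, eq_top_of_serreGen_mem (fun j => (mem_engel_iff ..).2 ?_)
    fun j => (mem_engel_iff ..).2 ?_⟩
  · refine ⟨(-A i j).toNat + 1, ?_⟩
    rw [pow_succ, Module.End.mul_apply]
    exact serreGen_ad_E_pow i j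
  · exact ⟨3, (std K hA).ad_e_pow_three_f i j⟩
  · exact ⟨3, (std K hA).swap.ad_e_pow_three_f i j⟩
  · refine ⟨(-A i j).toNat + 1, ?_⟩
    rw [pow_succ, Module.End.mul_apply]
    exact serreGen_ad_F_pow i j

end ChevalleySystem

section Triangular

variable {K : Type*} [Field K] {ι : Type*} [DecidableEq ι] {A : Matrix ι ι ℤ}
  {L : Type*} [LieRing L] [LieAlgebra K L]

/-- `IsMonomial e c x`: the element `x` is an iterated bracket `⁅e i₁, ⁅e i₂, …, e iₖ⁆⁆` in which
`e i` occurs `c i` times. -/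
inductive IsMonomial (e : ι → L) : (ι → ℤ) → L → Prop
  | base (i : ι) : IsMonomial e (Pi.single i 1) (e i)
  | lie (i : ι) {c : ι → ℤ} {x : L} (h : IsMonomial e c x) :
      IsMonomial e (c + Pi.single i 1) ⁅e i, x⁆

namespace IsMonomial

variable {e : ι → L} {c : ι → ℤ} {x : L}

theorem nonneg (h : IsMonomial e c x) : 0 ≤ c := by
  induction h with
  | base i => exact Pi.single_nonneg.2 zero_le_one
  | lie i _ ih => exact add_nonneg ih (Pi.single_nonneg.2 zero_le_one)

theorem ne_zero (h : IsMonomial e c x) : c ≠ 0 := by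
  cases h with
  | base i => simp
  | @lie i c x h =>
    intro h0
    have h1 := congrFun h0 i
    have h2 := h.nonneg i
    simp only [Pi.add_apply, Pi.single_eq_same, Pi.zero_apply] at h1 h2
    omega

theorem eq_of_single {i : ι} {n : ℤ} (h : IsMonomial e (Pi.single i n) x) (hx : x ≠ 0) :
    n = 1 ∧ x = e i := by
  generalize hc : (Pi.single i n : ι → ℤ) = c at h
  induction h generalizing n with
  | base j =>
    obtain rfl | hij := eq_or_ne j i
    · exact ⟨Pi.single_injective j hc, rfl⟩
    · simpa [hij] using congrFun hc j
  | @lie j c x h ih =>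
    obtain rfl | hij := eq_or_ne j i
    · have hc' : (Pi.single j (n - 1) : ι → ℤ) = c := by
        rw [Pi.single_sub, hc, add_sub_cancel_right]
      have hx0 : x ≠ 0 := fun h0 => hx (by rw [h0, lie_zero])
      rw [(ih hx0 hc').2, lie_self] at hx
      exact absurd rfl hx
    · have h1 := congrFun hc j
      have h2 := h.nonneg j
      simp only [Pi.add_apply, Pi.single_eq_same, Pi.single_eq_of_ne hij, Pi.zero_apply] at h1 h2
      omega

end IsMonomial

namespace ChevalleySystem

theorem mem_weightSpace_of_isMonomial [Fintype ι] (C : ChevalleySystem A L) {c : ι → ℤ} {x : L}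
    (h : IsMonomial C.e c x) : x ∈ C.weightSpace K (A *ᵥ c) := by
  induction h with
  | base i => rw [mulVec_single_one]; exact C.e_mem_weightSpace i
  | lie i _ ih =>
    rw [mulVec_add, add_comm, mulVec_single_one]
    exact C.lie_mem_weightSpace (C.e_mem_weightSpace i) ih

theorem exists_mem_weightSpace_of_isMonomial (C : ChevalleySystem A L) {c : ι → ℤ} {x : L}
    (h : IsMonomial C.e c x) : ∃ χ, x ∈ C.weightSpace K χ := by
  induction h with
  | base i => exact ⟨_, C.e_mem_weightSpace i⟩
  | lie i _ ih =>
    obtain ⟨χ, hχ⟩ := ih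
    exact ⟨_, C.lie_mem_weightSpace (C.e_mem_weightSpace i) hχ⟩

variable (K) in
/-- The span of all iterated brackets of the `e i`; for `C.swap` it is the span of those of
the `f i`. -/
def upper (C : ChevalleySystem A L) : Submodule K L :=
  Submodule.span K {x | ∃ c, IsMonomial C.e c x}

theorem mem_upper_of_isMonomial (C : ChevalleySystem A L) {c : ι → ℤ} {x : L}
    (h : IsMonomial C.e c x) : x ∈ C.upper K :=
  Submodule.subset_span ⟨c, h⟩

theorem lie_e_mem_upper (C : ChevalleySystem A L) (i : ι) {x : L} (hx : x ∈ C.upper K) :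
    ⁅C.e i, x⁆ ∈ C.upper K := by
  suffices C.upper K ≤ (C.upper K).comap (ad K L (C.e i)) from this hx
  exact Submodule.span_le.2 fun x ⟨_, hc⟩ => C.mem_upper_of_isMonomial (hc.lie i)

theorem lie_e_mem_upper_of_mem_cartan (C : ChevalleySystem A L) (i : ι) {x : L}
    (hx : x ∈ C.cartan K) : ⁅C.e i, x⁆ ∈ C.upper K := by
  suffices C.cartan K ≤ (C.upper K).comap (ad K L (C.e i)) from this hx
  refine Submodule.span_le.2 (Set.range_subset_iff.2 fun j => ?_)
  rw [SetLike.mem_coe, Submodule.mem_comap, ad_apply, ← lie_skew, C.lie_h_e]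
  exact neg_mem (zsmul_mem (C.mem_upper_of_isMonomial (.base i)) _)

theorem lie_f_mem_of_isMonomial (C : ChevalleySystem A L) (j : ι) {c : ι → ℤ} {x : L}
    (hc : IsMonomial C.e c x) : ⁅C.f j, x⁆ ∈ C.upper K ⊔ C.cartan K := by
  induction hc with
  | base i =>
    obtain rfl | hij := eq_or_ne j i
    · rw [← lie_skew, C.lie_e_f]
      exact neg_mem (Submodule.mem_sup_right (Submodule.subset_span ⟨j, rfl⟩))
    · rw [C.lie_f_e_of_ne hij]; exact zero_mem _
  | @lie i c x h ih =>
    rw [leibniz_lie]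
    refine add_mem (Submodule.mem_sup_left ?_) (Submodule.mem_sup_left ?_)
    · obtain rfl | hij := eq_or_ne j i
      · obtain ⟨χ, hχ⟩ := C.exists_mem_weightSpace_of_isMonomial (K := K) h
        rw [← lie_skew (C.f j), C.lie_e_f, neg_lie, C.mem_weightSpace.1 hχ j]
        exact neg_mem (zsmul_mem (C.mem_upper_of_isMonomial h) _)
      · rw [C.lie_f_e_of_ne hij, zero_lie]; exact zero_mem _
    · obtain ⟨y, hy, z, hz, hyz⟩ := Submodule.mem_sup.1 ih
      rw [← hyz, lie_add]
      exact add_mem (C.lie_e_mem_upper i hy) (C.lie_e_mem_upper_of_mem_cartan i hz)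

theorem lie_f_mem_of_mem_upper (C : ChevalleySystem A L) (j : ι) {x : L}
    (hx : x ∈ C.upper K) : ⁅C.f j, x⁆ ∈ C.upper K ⊔ C.cartan K := by
  suffices C.upper K ≤ (C.upper K ⊔ C.cartan K).comap (ad K L (C.f j)) from this hx
  exact Submodule.span_le.2 fun x ⟨_, hc⟩ => C.lie_f_mem_of_isMonomial j hc

variable (K) in
/-- The sum of the three pieces of the triangular decomposition. -/
def triangular (C : ChevalleySystem A L) : Submodule K L :=
  C.upper K ⊔ C.cartan K ⊔ C.swap.upper K

theorem triangular_swap (C : ChevalleySystem A L) : C.swap.triangular K = C.triangular K := by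
  rw [triangular, triangular, cartan_swap, sup_comm, ← sup_assoc, sup_right_comm]
  rfl

theorem lie_e_mem_triangular (C : ChevalleySystem A L) (i : ι) {x : L}
    (hx : x ∈ C.triangular K) : ⁅C.e i, x⁆ ∈ C.triangular K := by
  suffices C.triangular K ≤ (C.triangular K).comap (ad K L (C.e i)) from this hx
  have upper_le : C.upper K ≤ C.triangular K := le_sup_left.trans le_sup_left
  have lower_le : C.swap.upper K ⊔ C.swap.cartan K ≤ C.triangular K := by
    rw [cartan_swap]
    exact sup_le le_sup_right (le_sup_right.trans le_sup_left)
  refine sup_le (sup_le (fun x hx => ?_) fun x hx => ?_) fun x hx => ?_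
  · exact upper_le (C.lie_e_mem_upper i hx)
  · exact upper_le (C.lie_e_mem_upper_of_mem_cartan i hx)
  · exact lower_le (C.swap.lie_f_mem_of_mem_upper i hx)

/-- The iterated brackets spanning `C.triangular`. -/
def monomials (C : ChevalleySystem A L) : Set L :=
  {x | ∃ c, IsMonomial C.e c x} ∪ Set.range C.h ∪ {x | ∃ c, IsMonomial C.f c x}

theorem span_monomials (C : ChevalleySystem A L) :
    Submodule.span K C.monomials = C.triangular K := by
  rw [monomials, Submodule.span_union, Submodule.span_union]
  rfl

theorem mem_weightSpace_of_isMonomial_f [Fintype ι] (C : ChevalleySystem A L) {c : ι → ℤ} {x : L}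
    (h : IsMonomial C.f c x) : x ∈ C.weightSpace K (A *ᵥ (-c)) := by
  rw [mulVec_neg, ← weightSpace_swap]
  exact C.swap.mem_weightSpace_of_isMonomial h

theorem exists_mem_weightSpace_of_mem_monomials [Fintype ι] (C : ChevalleySystem A L) {x : L}
    (hx : x ∈ C.monomials) : ∃ c, x ∈ C.weightSpace K (A *ᵥ c) := by
  obtain (⟨c, hc⟩ | ⟨i, rfl⟩) | ⟨c, hc⟩ := hx
  · exact ⟨c, C.mem_weightSpace_of_isMonomial hc⟩
  · exact ⟨0, by rw [mulVec_zero]; exact C.h_mem_weightSpace i⟩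
  · exact ⟨-c, C.mem_weightSpace_of_isMonomial_f hc⟩

variable [CharZero K]

theorem mem_monomials_cases [Fintype ι] (C : ChevalleySystem A L) (hA : IsADE A) {c : ι → ℤ} {x : L}
    (hx : x ∈ C.monomials) (hx0 : x ≠ 0) (hxc : x ∈ C.weightSpace K (A *ᵥ c)) :
    IsMonomial C.e c x ∨ (c = 0 ∧ x ∈ Set.range C.h) ∨ IsMonomial C.f (-c) x := by
  have eq_of_mem {d : ι → ℤ} (hd : x ∈ C.weightSpace K (A *ᵥ d)) : d = c :=
    hA.mulVec_injective (C.eq_of_mem_weightSpace hx0 hd hxc)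
  obtain (⟨d, hd⟩ | hh) | ⟨d, hd⟩ := hx
  · exact .inl (eq_of_mem (C.mem_weightSpace_of_isMonomial hd) ▸ hd)
  · obtain ⟨i, rfl⟩ := hh
    exact .inr (.inl ⟨(eq_of_mem (d := 0) (by simpa using C.h_mem_weightSpace i)).symm, i, rfl⟩)
  · refine .inr (.inr ?_)
    rwa [← eq_of_mem (C.mem_weightSpace_of_isMonomial_f hd), neg_neg]

end ChevalleySystem

end Triangular

section StdWeights

namespace ChevalleySystem

variable {K : Type*} [Field K] [CharZero K] {ι : Type*} [Fintype ι] [DecidableEq ι]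
  {A : Matrix ι ι ℤ} [Nontrivial (A.ToLieAlgebra K)]

theorem std_triangular (hA : IsADE A) : (std K hA).triangular K = ⊤ := by
  refine eq_top_of_lie_serreGen_mem (fun i => ?_) (fun i => ?_)
    (fun i x hx => (std K hA).lie_e_mem_triangular i hx) fun i x hx => ?_
  · exact Submodule.mem_sup_left (Submodule.mem_sup_left
      ((std K hA).mem_upper_of_isMonomial (.base i)))
  · exact Submodule.mem_sup_right ((std K hA).swap.mem_upper_of_isMonomial (.base i))
  · rw [← triangular_swap] at hx ⊢
    exact (std K hA).swap.lie_e_mem_triangular i hx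

theorem std_iSup_weightSpace (hA : IsADE A) :
    ⨆ c, (std K hA).weightSpace K (A *ᵥ c) = ⊤ := by
  rw [eq_top_iff, ← std_triangular hA, ← span_monomials, Submodule.span_le]
  intro x hx
  obtain ⟨c, hc⟩ := (std K hA).exists_mem_weightSpace_of_mem_monomials (K := K) hx
  exact Submodule.mem_iSup_of_mem (p := fun c => (std K hA).weightSpace K (A *ᵥ c)) c hc

theorem std_weightSpace_le_span (hA : IsADE A) (c : ι → ℤ) : (std K hA).weightSpace K (A *ᵥ c) ≤
    Submodule.span K ((std K hA).monomials ∩ (std K hA).weightSpace K (A *ᵥ c)) :=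
  (std K hA).weightSpace_le_span_inter (by rw [span_monomials, std_triangular])
    (fun _ hx => ((std K hA).exists_mem_weightSpace_of_mem_monomials hx).imp'
      (A *ᵥ ·) fun _ => id) _

theorem std_weightSpace_le {hA : IsADE A} {c : ι → ℤ} {P : Submodule K (A.ToLieAlgebra K)}
    (h : ∀ x ∈ (std K hA).monomials, x ∈ (std K hA).weightSpace K (A *ᵥ c) → x ≠ 0 → x ∈ P) :
    (std K hA).weightSpace K (A *ᵥ c) ≤ P :=
  (std_weightSpace_le_span hA c).trans <| Submodule.span_le.2 fun x ⟨hx, hxc⟩ =>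
    (eq_or_ne x 0).elim (fun h0 => h0 ▸ P.zero_mem) (h x hx hxc)

theorem std_exists_monomial {hA : IsADE A} {c : ι → ℤ}
    (h : (std K hA).weightSpace K (A *ᵥ c) ≠ ⊥) :
    ∃ x ∈ (std K hA).monomials, x ∈ (std K hA).weightSpace K (A *ᵥ c) ∧ x ≠ 0 := by
  by_contra! hx
  exact h (eq_bot_iff.2 (std_weightSpace_le fun x h1 h2 h3 => absurd (hx x h1 h2) h3))

theorem std_nonneg_or_nonpos {hA : IsADE A} {c : ι → ℤ}
    (h : (std K hA).weightSpace K (A *ᵥ c) ≠ ⊥) : 0 ≤ c ∨ c ≤ 0 := by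
  obtain ⟨x, hx, hxc, hx0⟩ := std_exists_monomial h
  obtain hc | ⟨rfl, -⟩ | hc := (std K hA).mem_monomials_cases hA hx hx0 hxc
  · exact .inl hc.nonneg
  · exact .inl le_rfl
  · exact .inr (neg_nonneg.1 hc.nonneg)

theorem std_weightSpace_zero_le (hA : IsADE A) :
    (std K hA).weightSpace K 0 ≤ (std K hA).cartan K := by
  rw [← mulVec_zero A]
  refine std_weightSpace_le fun x hx hxc hx0 => ?_
  obtain hc | ⟨-, hh⟩ | hc := (std K hA).mem_monomials_cases hA hx hx0 hxc
  · exact absurd rfl hc.ne_zero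
  · exact Submodule.subset_span hh
  · exact absurd neg_zero hc.ne_zero

theorem std_eq_of_mem_monomials_of_single {hA : IsADE A} {i : ι} {n : ℤ} (hn : 0 < n)
    {x : A.ToLieAlgebra K} (hx : x ∈ (std K hA).monomials)
    (hxc : x ∈ (std K hA).weightSpace K (A *ᵥ Pi.single i n)) (hx0 : x ≠ 0) :
    n = 1 ∧ x = (std K hA).e i := by
  obtain hc | ⟨hc, -⟩ | hc := (std K hA).mem_monomials_cases hA hx hx0 hxc
  · exact hc.eq_of_single hx0
  · exact absurd (Pi.single_eq_zero_iff.1 hc) hn.ne'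
  · have := hc.nonneg i
    simp only [Pi.zero_apply, Pi.neg_apply, Pi.single_eq_same] at this
    omega

theorem std_weightSpace_single_le (hA : IsADE A) (i : ι) :
    (std K hA).weightSpace K (A *ᵥ Pi.single i 1) ≤ Submodule.span K {(std K hA).e i} :=
  std_weightSpace_le fun x hx hxc hx0 => by
    rw [(std_eq_of_mem_monomials_of_single one_pos hx hxc hx0).2]
    exact Submodule.mem_span_singleton_self _

theorem std_exists_single {hA : IsADE A} {Q : (ι → ℤ) → Prop}
    (hQ : ∀ i c, Q c → Q (simpleReflection A i c))
    (hQw : ∀ c, Q c → (std K hA).weightSpace K (A *ᵥ c) ≠ ⊥) {c : ι → ℤ} (h0 : c ≠ 0) (hc : Q c) :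
    ∃ i, Q (Pi.single i 1) := by
  refine hA.exists_single hQ (fun c h => std_nonneg_or_nonpos (hQw c h)) (fun i n hn h => ?_) h0 hc
  obtain ⟨x, hx, hxc, hx0⟩ := std_exists_monomial (hQw _ h)
  exact (std_eq_of_mem_monomials_of_single hn hx hxc hx0).1

theorem std_weightSpace_simpleReflection_ne_bot {hA : IsADE A} {c : ι → ℤ} (i : ι)
    (h : (std K hA).weightSpace K (A *ᵥ c) ≠ ⊥) :
    (std K hA).weightSpace K (A *ᵥ simpleReflection A i c) ≠ ⊥ := by
  rwa [Ne, ← Submodule.rank_eq_zero, rank_weightSpace_simpleReflection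
    (std_isLocallyNilpotent hA), Submodule.rank_eq_zero]

theorem std_isRoot {hA : IsADE A} {c : ι → ℤ} (h0 : c ≠ 0)
    (h : (std K hA).weightSpace K (A *ᵥ c) ≠ ⊥) : IsRoot A c := by
  by_contra hc
  obtain ⟨i, -, hi⟩ := std_exists_single
    (Q := fun c => (std K hA).weightSpace K (A *ᵥ c) ≠ ⊥ ∧ ¬ IsRoot A c)
    (fun i c h => ⟨std_weightSpace_simpleReflection_ne_bot i h.1, fun hc => h.2 <| by
      simpa [simpleReflection_simpleReflection hA.diag_eq_two] using hc.simpleReflection hA i⟩)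
    (fun c h => h.1) h0 ⟨h, hc⟩
  exact hi (IsRoot.single hA i)

theorem std_rank_weightSpace_le_one (hA : IsADE A) {c : ι → ℤ} (h0 : c ≠ 0) :
    Module.rank K ((std K hA).weightSpace K (A *ᵥ c)) ≤ 1 := by
  by_contra h
  obtain ⟨i, hi⟩ := std_exists_single
    (Q := fun c => ¬ Module.rank K ((std K hA).weightSpace K (A *ᵥ c)) ≤ 1)
    (fun i c h => by rwa [rank_weightSpace_simpleReflection (std_isLocallyNilpotent hA)])
    (fun c h h0 => h (by rw [h0]; simp)) h0 h
  exact hi ((rank_submodule_le_one_iff' _).2 ⟨_, std_weightSpace_single_le hA i⟩)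

end ChevalleySystem

end StdWeights

/-! ### Simplicity and dimension -/

section Weights

variable {K : Type*} [Field K] {ι : Type*} {A : Matrix ι ι ℤ}

theorem IsADE.det_ne_zero [Fintype ι] [DecidableEq ι] (hA : IsADE A) : A.det ≠ 0 := fun h => by
  obtain ⟨v, hv, h0⟩ := exists_mulVec_eq_zero_iff.2 h
  exact hv (hA.mulVec_injective (h0.trans (mulVec_zero A).symm))

theorem eq_zero_of_vecMul_map_intCast_eq_zero [CharZero K] [Fintype ι] [DecidableEq ι]
    (hA : A.det ≠ 0) {a : ι → K} (ha : a ᵥ* A.map (Int.cast : ℤ → K) = 0) : a = 0 := by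
  refine eq_zero_of_vecMul_eq_zero ?_ ha
  have h := (Int.castRingHom K).map_det A
  rw [RingHom.mapMatrix_apply, Int.coe_castRingHom] at h
  exact h ▸ Int.cast_ne_zero.2 hA

namespace ChevalleySystem

variable {L : Type*} [LieRing L] [LieAlgebra K L]

theorem sum_smul_h_lie_e [Fintype ι] (C : ChevalleySystem A L) (a : ι → K) (j : ι) :
    ⁅∑ i, a i • C.h i, C.e j⁆ = (a ᵥ* A.map (Int.cast : ℤ → K)) j • C.e j := by
  simp only [sum_lie, smul_lie, C.lie_h_e, vecMul, dotProduct, map_apply, Finset.sum_smul,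
    mul_smul, Int.cast_smul_eq_zsmul]

/-- The weight component is isolated by applying the operators `ad (h i) - χ i`, which preserve the
ideal and kill the component of weight `χ`. -/
theorem exists_mem_weightSpace_of_mem_iSup (C : ChevalleySystem A L) (I : LieIdeal K L)
    (s : Finset (ι → ℤ)) {x : L} (hxI : x ∈ I) (hx0 : x ≠ 0)
    (hx : x ∈ ⨆ χ ∈ s, C.weightSpace K χ) : ∃ χ ∈ s, ∃ y ∈ I, y ≠ 0 ∧ y ∈ C.weightSpace K χ := by
  classical
  induction s using Finset.induction_on generalizing x with
  | empty => simp_all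
  | insert χ s _ ih =>
    by_cases hχ : x ∈ C.weightSpace K χ
    · exact ⟨χ, Finset.mem_insert_self χ s, x, hxI, hx0, hχ⟩
    obtain ⟨i, hi⟩ : ∃ i, ⁅C.h i, x⁆ ≠ χ i • x := by
      simpa only [mem_weightSpace, not_forall] using hχ
    rw [Finset.iSup_insert, Submodule.mem_sup] at hx
    obtain ⟨a, ha, b, hb, rfl⟩ := hx
    have hmem : ⁅C.h i, a + b⁆ - χ i • (a + b) ∈ ⨆ ψ ∈ s, C.weightSpace K ψ := by
      have hstable : ⨆ ψ ∈ s, C.weightSpace K ψ ≤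
          (⨆ ψ ∈ s, C.weightSpace K ψ).comap (ad K L (C.h i)) :=
        iSup₂_le fun ψ hψ y hy => Submodule.mem_iSup_of_mem ψ <| Submodule.mem_iSup_of_mem hψ <| by
          rw [ad_apply, C.mem_weightSpace.1 hy i]
          exact zsmul_mem hy _
      rw [lie_add, smul_add, C.mem_weightSpace.1 ha i, add_sub_add_left_eq_sub]
      exact sub_mem (hstable hb) (zsmul_mem hb _)
    obtain ⟨ψ, hψ, h⟩ := ih (sub_mem (lie_mem_right K L I _ _ hxI) (zsmul_mem hxI _))
      (sub_ne_zero.2 hi) hmem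
    exact ⟨ψ, Finset.mem_insert_of_mem hψ, h⟩

variable [CharZero K]

theorem linearIndependent_h [Fintype ι] [DecidableEq ι] (C : ChevalleySystem A L)
    (hA : A.det ≠ 0) : LinearIndependent K C.h := by
  rw [Fintype.linearIndependent_iff]
  intro a ha
  refine congrFun (eq_zero_of_vecMul_map_intCast_eq_zero hA (funext fun j => ?_))
  have h := C.sum_smul_h_lie_e a j
  rw [ha, zero_lie] at h
  exact (smul_eq_zero.1 h.symm).resolve_right (C.e_ne_zero j)

theorem sum_finrank_weightSpace_le [FiniteDimensional K L] (C : ChevalleySystem A L)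
    (s : Finset (ι → ℤ)) :
    ∑ χ ∈ s, Module.finrank K (C.weightSpace K χ) ≤ Module.finrank K L := by
  classical
  have h := LinearMap.finrank_le_finrank_of_injective
    (f := DirectSum.coeLinearMap fun χ : s => C.weightSpace K χ)
    (C.iSupIndep_weightSpace.comp Subtype.val_injective).dfinsupp_lsum_injective
  rwa [Module.finrank_directSum,
    Finset.sum_coe_sort s fun χ => Module.finrank K (C.weightSpace K χ)] at h

end ChevalleySystem

end Weights

section Simplicity

namespace ChevalleySystem

variable {K : Type*} [Field K] [CharZero K] {ι : Type*} [Fintype ι] [DecidableEq ι]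
  {A : Matrix ι ι ℤ} [Nontrivial (A.ToLieAlgebra K)]

theorem std_exists_finset_span_eq_top (hA : IsADE A) {s : Finset (ι → ℤ)}
    (hs : ∀ c, IsRoot A c → c ∈ s) : ∃ t : Finset (A.ToLieAlgebra K),
      t.card ≤ Fintype.card ι + s.card ∧ Submodule.span K (t : Set (A.ToLieAlgebra K)) = ⊤ := by
  classical
  have exists_generator (c : ι → ℤ) : ∃ v : A.ToLieAlgebra K,
      c ≠ 0 → (std K hA).weightSpace K (A *ᵥ c) ≤ Submodule.span K {v} := by
    obtain rfl | hc := eq_or_ne c 0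
    · exact ⟨0, fun h => absurd rfl h⟩
    · obtain ⟨v, hv⟩ := (rank_submodule_le_one_iff' _).1
        (std_rank_weightSpace_le_one (K := K) hA hc)
      exact ⟨v, fun _ => hv⟩
  choose v hv using exists_generator
  refine ⟨Finset.univ.image (std K hA).h ∪ s.image v, (Finset.card_union_le _ _).trans
    (add_le_add Finset.card_image_le Finset.card_image_le), ?_⟩
  rw [eq_top_iff, ← std_iSup_weightSpace hA, iSup_le_iff]
  intro c
  obtain rfl | hc0 := eq_or_ne c 0
  · rw [mulVec_zero]
    exact (std_weightSpace_zero_le hA).trans (Submodule.span_mono (by simp))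
  by_cases hc : (std K hA).weightSpace K (A *ᵥ c) = ⊥
  · exact hc ▸ bot_le
  · have hvc : v c ∈ s.image v := Finset.mem_image_of_mem v (hs c (std_isRoot hc0 hc))
    exact (hv c hc0).trans (Submodule.span_mono (Set.singleton_subset_iff.2
      (Finset.mem_union_right _ hvc)))

theorem std_eq_top_of_h_mem (hA : IsADE A) {I : LieIdeal K (A.ToLieAlgebra K)} {i : ι}
    (hi : (std K hA).h i ∈ I) : I = ⊤ := by
  have smul_mem {n : ℤ} (hn : n ≠ 0) {x : A.ToLieAlgebra K} (hx : n • x ∈ I) : x ∈ I := by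
    rw [← Int.cast_smul_eq_zsmul K] at hx
    exact (I.toSubmodule.smul_mem_iff (Int.cast_ne_zero.2 hn)).1 hx
  have e_mem {i j : ι} (hij : A i j ≠ 0) (h : (std K hA).h i ∈ I) : (std K hA).e j ∈ I :=
    smul_mem hij ((std K hA).lie_h_e i j ▸ lie_mem_left K _ I _ _ h)
  have f_mem {i j : ι} (hij : A i j ≠ 0) (h : (std K hA).h i ∈ I) : (std K hA).f j ∈ I :=
    smul_mem hij (neg_mem_iff.1 ((std K hA).lie_h_f i j ▸ lie_mem_left K _ I _ _ h))
  have h_mem : ∀ j, (std K hA).h j ∈ I := hA.forall_of_apply (fun i j hij h =>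
    (std K hA).lie_e_f j ▸ lie_mem_left K _ I _ _ (e_mem hij h)) hi
  have diag_ne_zero (i : ι) : A i i ≠ 0 := by rw [hA.diag_eq_two]; exact two_ne_zero
  exact (LieSubmodule.toSubmodule_eq_top _).1 (eq_top_of_lie_serreGen_mem
    (fun i => e_mem (diag_ne_zero i) (h_mem i)) (fun i => f_mem (diag_ne_zero i) (h_mem i))
    (fun i x hx => lie_mem_right K _ I _ _ hx) fun i x hx => lie_mem_right K _ I _ _ hx)

theorem std_eq_top_of_e_mem (hA : IsADE A) {I : LieIdeal K (A.ToLieAlgebra K)} {i : ι}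
    (hi : (std K hA).e i ∈ I) : I = ⊤ :=
  std_eq_top_of_h_mem hA ((std K hA).lie_e_f i ▸ lie_mem_left K _ I _ _ hi)

theorem std_eq_top_of_mem_weightSpace_zero (hA : IsADE A) {I : LieIdeal K (A.ToLieAlgebra K)}
    {x : A.ToLieAlgebra K} (hxI : x ∈ I) (hx0 : x ≠ 0) (hx : x ∈ (std K hA).weightSpace K 0) :
    I = ⊤ := by
  obtain ⟨a, rfl⟩ := (Submodule.mem_span_range_iff_exists_fun K).1 (std_weightSpace_zero_le hA hx)
  obtain ⟨j, hj⟩ : ∃ j, (a ᵥ* A.map (Int.cast : ℤ → K)) j ≠ 0 := by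
    by_contra! h
    exact hx0 (by simp [eq_zero_of_vecMul_map_intCast_eq_zero hA.det_ne_zero (funext h)])
  have h := lie_mem_left K _ I _ ((std K hA).e j) hxI
  rw [sum_smul_h_lie_e] at h
  exact std_eq_top_of_e_mem hA ((I.toSubmodule.smul_mem_iff hj).1 h)

theorem std_eq_top_of_mem_weightSpace (hA : IsADE A) {I : LieIdeal K (A.ToLieAlgebra K)}
    {c : ι → ℤ} (hc : c ≠ 0) {x : A.ToLieAlgebra K} (hxI : x ∈ I) (hx0 : x ≠ 0)
    (hx : x ∈ (std K hA).weightSpace K (A *ᵥ c)) : I = ⊤ := by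
  obtain ⟨i, y, hyI, hy0, hy⟩ := std_exists_single
    (Q := fun c => ∃ x ∈ I, x ≠ 0 ∧ x ∈ (std K hA).weightSpace K (A *ᵥ c))
    (fun i c ⟨x, hxI, hx0, hx⟩ => by
      obtain ⟨T, hT, hT0, hTI⟩ := exists_simpleReflection (K := K) (std_isLocallyNilpotent hA) i c
      exact ⟨T x, hTI I x hxI, fun h => hx0 (hT0 x hx h), hT x hx⟩)
    (fun c ⟨x, _, hx0, hx⟩ => (Submodule.ne_bot_iff _).2 ⟨x, hx, hx0⟩) hc ⟨x, hxI, hx0, hx⟩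
  obtain ⟨a, rfl⟩ := Submodule.mem_span_singleton.1 (std_weightSpace_single_le hA i hy)
  have ha : a ≠ 0 := by
    rintro rfl
    exact hy0 (zero_smul _ _)
  exact std_eq_top_of_e_mem hA ((I.toSubmodule.smul_mem_iff ha).1 hyI)

theorem std_isSimple [Nonempty ι] (hA : IsADE A) : IsSimple K (A.ToLieAlgebra K) where
  non_abelian h := ((std K hA).isSl2Triple (Classical.arbitrary ι)).h_ne_zero
    ((std K hA).lie_e_f _ ▸ trivial_lie_zero _ _ _ _)
  eq_bot_or_eq_top I := by
    refine or_iff_not_imp_left.2 fun hI => ?_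
    obtain ⟨x, hxI, hx0⟩ := (Submodule.ne_bot_iff I.toSubmodule).1 (by simpa using hI)
    obtain ⟨s, hs⟩ := Submodule.mem_iSup_iff_exists_finset.1
      (std_iSup_weightSpace (K := K) hA ▸ Submodule.mem_top :
        x ∈ ⨆ c, (std K hA).weightSpace K (A *ᵥ c))
    classical
    obtain ⟨χ, hχ, y, hyI, hy0, hy⟩ := (std K hA).exists_mem_weightSpace_of_mem_iSup I
      (s.image (A *ᵥ ·)) hxI hx0 (by simpa only [Finset.iSup_finset_image] using hs)
    obtain ⟨c, -, rfl⟩ := Finset.mem_image.1 hχ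
    obtain rfl | hc := eq_or_ne c 0
    · exact std_eq_top_of_mem_weightSpace_zero hA hyI hy0 (mulVec_zero A ▸ hy)
    · exact std_eq_top_of_mem_weightSpace hA hc hyI hy0 hy

end ChevalleySystem

end Simplicity

section Dimension

variable (K : Type*) [Field K] [CharZero K]

theorem exists_finset_span_eq_top_e₈ : ∃ t : Finset (e₈ K),
    t.card ≤ 248 ∧ Submodule.span K (t : Set (e₈ K)) = ⊤ := by
  obtain _ | _ := subsingleton_or_nontrivial (e₈ K)
  · exact ⟨∅, Nat.zero_le _, Subsingleton.elim _ _⟩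
  · obtain ⟨s, hs, hcard⟩ := exists_finset_isRoot_E₈
    obtain ⟨t, ht, hspan⟩ := ChevalleySystem.std_exists_finset_span_eq_top (K := K) isADE_E₈
      fun c hc => (hs c).2 hc
    rw [hcard, Fintype.card_fin] at ht
    exact ⟨t, ht, hspan⟩

instance finiteDimensional_e₈ : FiniteDimensional K (e₈ K) :=
  let ⟨t, _, ht⟩ := exists_finset_span_eq_top_e₈ K
  ⟨⟨t, ht⟩⟩

theorem finrank_e₈_le : Module.finrank K (e₈ K) ≤ 248 := by
  obtain ⟨t, hcard, ht⟩ := exists_finset_span_eq_top_e₈ K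
  rw [← finrank_top, ← ht]
  exact (finrank_span_finset_le_card t).trans hcard

instance isSimple_e₈ [Nontrivial (e₈ K)] : IsSimple K (e₈ K) :=
  ChevalleySystem.std_isSimple isADE_E₈

variable {K}

namespace ChevalleySystem

theorem finrank_weightSpace_eq {ι : Type*} [Fintype ι] {A : Matrix ι ι ℤ}
    (hA : IsADE A) {L : Type*} [LieRing L] [LieAlgebra K L] {C : ChevalleySystem A L}
    (hC : C.IsLocallyNilpotent K) {c d : ι → ℤ} (hc : IsRoot A c) (hd : IsRoot A d) :
    Module.finrank K (C.weightSpace K (A *ᵥ d)) = Module.finrank K (C.weightSpace K (A *ᵥ c)) := by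
  classical
  exact IsRoot.induction hA (p := fun d => Module.finrank K (C.weightSpace K (A *ᵥ d)) =
      Module.finrank K (C.weightSpace K (A *ᵥ c)))
    (fun i d h => by rwa [Module.finrank, rank_weightSpace_simpleReflection hC]) hc rfl hd

theorem finrank_weightSpace_pos {ι : Type*} [Fintype ι] {A : Matrix ι ι ℤ}
    (hA : IsADE A) {L : Type*} [LieRing L] [LieAlgebra K L] [FiniteDimensional K L]
    (C : ChevalleySystem A L) [Nonempty ι] {c : ι → ℤ} (hc : IsRoot A c) :
    0 < Module.finrank K (C.weightSpace K (A *ᵥ c)) := by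
  classical
  let i := Classical.arbitrary ι
  rw [finrank_weightSpace_eq hA C.isLocallyNilpotent (IsRoot.single hA i) hc, mulVec_single_one]
  exact Submodule.one_le_finrank_iff.2
    ((Submodule.ne_bot_iff _).2 ⟨_, C.e_mem_weightSpace i, C.e_ne_zero i⟩)

theorem card_mul_finrank_weightSpace_add_le {ι : Type*} [Fintype ι]
    {A : Matrix ι ι ℤ} (hA : IsADE A) {s : Finset (ι → ℤ)} (hs : ∀ c, c ∈ s ↔ IsRoot A c)
    {L : Type*} [LieRing L] [LieAlgebra K L] [FiniteDimensional K L]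
    (C : ChevalleySystem A L) {c : ι → ℤ} (hc : IsRoot A c) :
    s.card * Module.finrank K (C.weightSpace K (A *ᵥ c)) + Module.finrank K (C.weightSpace K 0) ≤
      Module.finrank K L := by
  classical
  have h0 : (0 : ι → ℤ) ∉ s := fun h => ((hs 0).1 h).ne_zero rfl
  have h := C.sum_finrank_weightSpace_le (K := K) ((insert 0 s).image (A *ᵥ ·))
  rw [Finset.sum_image hA.mulVec_injective.injOn, Finset.sum_insert h0, mulVec_zero,
    Finset.sum_congr rfl fun d hd =>
      finrank_weightSpace_eq hA C.isLocallyNilpotent hc ((hs d).1 hd), Finset.sum_const,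
    smul_eq_mul, add_comm] at h
  exact h

theorem finrank_weightSpace_add_le (C : ChevalleySystem E₇ (e₈ K)) {c : Fin 7 → ℤ}
    (hc : IsRoot E₇ c) : 126 * Module.finrank K (C.weightSpace K (E₇ *ᵥ c)) +
      Module.finrank K (C.weightSpace K 0) ≤ Module.finrank K (e₈ K) := by
  obtain ⟨s, hs, hcard⟩ := exists_finset_isRoot_E₇
  exact hcard ▸ card_mul_finrank_weightSpace_add_le isADE_E₇ hs C hc

/-- The root weights have multiplicity less than two because `2 * 126 > 248`. -/
theorem finrank_weightSpace_eq_one (C : ChevalleySystem E₇ (e₈ K)) {c : Fin 7 → ℤ}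
    (hc : IsRoot E₇ c) : Module.finrank K (C.weightSpace K (E₇ *ᵥ c)) = 1 := by
  have hle := C.finrank_weightSpace_add_le hc
  have hpos := finrank_weightSpace_pos (K := K) isADE_E₇ C hc
  have h248 := finrank_e₈_le K
  omega

end ChevalleySystem

theorem exists_restrict_E₇ {L : Type*} [LieRing L] (C : ChevalleySystem E₈ L) :
    ∃ C' : ChevalleySystem E₇ L,
      ∀ i, C'.h i = C.h i.castSucc ∧ C'.e i = C.e i.castSucc ∧ C'.f i = C.f i.castSucc := by
  rw [← E₈_submatrix_castSucc]
  exact ⟨C.submatrix Fin.castSuccEmb, fun i => ⟨rfl, rfl, rfl⟩⟩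

/-- The standard `E₇`-subsystem has `126` root weights, and its weight-zero space contains the `8`
independent elements `h i`. -/
theorem le_finrank_e₈ [Nontrivial (e₈ K)] : 134 ≤ Module.finrank K (e₈ K) := by
  let C₈ : ChevalleySystem E₈ (e₈ K) := ChevalleySystem.std K isADE_E₈
  obtain ⟨C₇, hC₇⟩ := exists_restrict_E₇ (L := e₈ K) C₈
  have hle := C₇.finrank_weightSpace_add_le (IsRoot.single isADE_E₇ 0)
  rw [C₇.finrank_weightSpace_eq_one (IsRoot.single isADE_E₇ 0)] at hle
  have h8 : 8 ≤ Module.finrank K (C₇.weightSpace K 0) := by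
    have hcard := finrank_span_eq_card (C₈.linearIndependent_h (K := K) isADE_E₈.det_ne_zero)
    rw [Fintype.card_fin] at hcard
    refine hcard.ge.trans (Submodule.finrank_mono (Submodule.span_le.2 ?_))
    rintro _ ⟨i, rfl⟩
    exact C₇.mem_weightSpace.2 fun j => by
      rw [(hC₇ j).1, C₈.lie_h_h, Pi.zero_apply, zero_smul]
  omega

end Dimension

/-! ### Extending the Dynkin diagram in a root system -/

section RootSystem

variable {K ι M N : Type*} [Field K] [AddCommGroup M] [Module K M] [AddCommGroup N]
  [Module K N] {P : RootPairing ι K M N} [P.IsCrystallographic]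

theorem pairing_eq_intCast (k l : ι) : P.pairing k l = (P.pairingIn ℤ k l : K) := by
  rw [← P.algebraMap_pairingIn ℤ, algebraMap_int_eq, eq_intCast]

theorem root_reflectionPerm_eq (k l : ι) :
    P.root (P.reflectionPerm k l) = P.root l - P.pairingIn ℤ l k • P.root k := by
  rw [P.root_reflectionPerm, RootPairing.reflection_apply_root' ℤ]

variable [CharZero K]

theorem pairingIn_reflectionPerm_left (k l j : ι) : P.pairingIn ℤ (P.reflectionPerm k l) j =
    P.pairingIn ℤ l j - P.pairingIn ℤ l k * P.pairingIn ℤ k j := by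
  have h : P.root (P.reflectionPerm k l) =
      (1 : ℤ) • P.root l + (-P.pairingIn ℤ l k) • P.root k := by
    rw [root_reflectionPerm_eq, one_smul, neg_smul, sub_eq_add_neg]
  rw [RootPairing.pairingIn_eq_add_of_root_eq_smul_add_smul h, one_smul, neg_smul, smul_eq_mul,
    sub_eq_add_neg]

section Length

variable [Fintype ι]

variable (P) in
/-- The squared length of a root for the canonical invariant form. -/
noncomputable def sqLength (k : ι) : ℤ := (P.posRootForm ℤ).rootLength k

theorem sqLength_pos (k : ι) : 0 < sqLength P k := (P.posRootForm ℤ).rootLength_pos k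

theorem pairingIn_mul_sqLength (k l : ι) :
    P.pairingIn ℤ l k * sqLength P k = P.pairingIn ℤ k l * sqLength P l :=
  (P.posRootForm ℤ).pairingIn_mul_eq_pairingIn_mul_swap k l

theorem sqLength_reflectionPerm (k l : ι) :
    sqLength P (P.reflectionPerm k l) = sqLength P l := by
  have h := (P.posRootForm ℤ).toInvariantForm.apply_reflection_reflection k (P.root l) (P.root l)
  rw [← P.root_reflectionPerm] at h
  apply (algebraMap ℤ K).injective_int
  simp only [sqLength, RootPairing.RootPositiveForm.algebraMap_rootLength]
  exact h

theorem pairingIn_comm_of_sqLength_eq {k l : ι} (h : sqLength P k = sqLength P l) :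
    P.pairingIn ℤ k l = P.pairingIn ℤ l k := by
  have hkl := pairingIn_mul_sqLength (P := P) k l
  rw [h] at hkl
  exact (mul_right_cancel₀ (sqLength_pos l).ne' hkl).symm

/-- The hypotheses force `⟨l, k⟩ = 1`, so that `⟨k, l⟩` is the ratio of the squared length of `k` to
that of `l`, hence also of `j`. -/
theorem pairingIn_eq_mul_of_two_le [P.IsReduced] {k l j : ι} (hkl : k ≠ l)
    (h2 : 2 ≤ P.pairingIn ℤ k l) (hlen : sqLength P l = sqLength P j) :
    P.pairingIn ℤ k j = P.pairingIn ℤ k l * P.pairingIn ℤ j k := by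
  have hlk : P.pairingIn ℤ l k = 1 := by
    have hmem := P.pairingIn_pairingIn_mem_set_of_isCrystal_of_isRed k l
    have hne : ¬ (P.pairingIn ℤ k l = 2 ∧ P.pairingIn ℤ l k = 2) := fun h =>
      hkl ((P.pairingIn_two_two_iff ℤ k l).1 h)
    simp only [Set.mem_insert_iff, Set.mem_singleton_iff, Prod.mk.injEq] at hmem
    omega
  have hratio := pairingIn_mul_sqLength (P := P) k l
  rw [hlk, one_mul, hlen] at hratio
  have hkj := pairingIn_mul_sqLength (P := P) k j
  rw [hratio] at hkj
  exact mul_right_cancel₀ (sqLength_pos j).ne' (by linarith)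

end Length

variable {κ : Type*} {A : Matrix κ κ ℤ} {a : κ → ι}

variable (P a) in
/-- The restriction of the root `b` to the span of the coroots of the `a i`, as the list of its
values on these coroots. -/
noncomputable def restriction (b : ι) : κ → ℤ := fun i => P.pairingIn ℤ b (a i)

theorem restriction_reflectionPerm (ha : ∀ j, restriction P a (a j) = A.col j) (i : κ) (b : ι) :
    restriction P a (P.reflectionPerm (a i) b) =
      restriction P a b - restriction P a b i • A.col i := by
  rw [← ha i]
  exact funext fun j => pairingIn_reflectionPerm_left (a i) b (a j)

theorem coroot'_eq_zero_of_mem_span {b : ι} (hb : restriction P a b = 0) {x : M}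
    (hx : x ∈ Submodule.span K (Set.range (P.root ∘ a))) : P.coroot' b x = 0 := by
  suffices h : Submodule.span K (Set.range (P.root ∘ a)) ≤ LinearMap.ker (P.coroot' b) from h hx
  rw [Submodule.span_le]
  rintro _ ⟨i, rfl⟩
  have hi : P.pairingIn ℤ (a i) b = 0 := P.pairingIn_eq_zero_iff.1 (congrFun hb i)
  simp [pairing_eq_intCast, hi]

variable [Fintype κ]

section DecidableEq

variable [DecidableEq κ]

theorem restriction_reflectionPerm_of_eq_mulVec (ha : ∀ j, restriction P a (a j) = A.col j) {b : ι}
    {c : κ → ℤ} (hb : restriction P a b = A *ᵥ c) (i : κ) :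
    restriction P a (P.reflectionPerm (a i) b) = A *ᵥ simpleReflection A i c := by
  rw [restriction_reflectionPerm ha, mulVec_simpleReflection, hb]

theorem sum_simpleReflection_smul {V : Type*} [AddCommGroup V] (v : κ → V) (c : κ → ℤ) (i : κ) :
    ∑ j, simpleReflection A i c j • v j = ∑ j, c j • v j - (A *ᵥ c) i • v i := by
  simp [simpleReflection, sub_smul, Finset.sum_sub_distrib, Pi.single_apply, ite_smul]

theorem exists_forall_dotProduct_col_eq (hA : A.det ≠ 0) :
    ∃ v : κ → ℤ, ∃ n : ℤ, 0 < n ∧ ∀ i, v ⬝ᵥ A.col i = n := by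
  refine ⟨(A.det • 1) ᵥ* A.adjugate, A.det * A.det, mul_self_pos.2 hA, fun i => ?_⟩
  change (((A.det • 1) ᵥ* A.adjugate) ᵥ* A) i = _
  rw [vecMul_vecMul, adjugate_mul, vecMul_smul, vecMul_one]
  simp

theorem exists_restriction_nonneg [Finite ι] (hA : A.det ≠ 0)
    (ha : ∀ j, restriction P a (a j) = A.col j) {p : ι → Prop}
    (hp : ∀ i b, p b → p (P.reflectionPerm (a i) b)) {b : ι} (hb : p b) :
    ∃ d, p d ∧ 0 ≤ restriction P a d := by
  obtain ⟨v, n, hn, hv⟩ := exists_forall_dotProduct_col_eq hA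
  obtain ⟨d, hd, hmax⟩ := Set.exists_max_image {d | p d} (fun d => v ⬝ᵥ restriction P a d)
    (Set.toFinite _) ⟨b, hb⟩
  refine ⟨d, hd, fun i => ?_⟩
  have h := hmax _ (hp i d hd)
  simp only [restriction_reflectionPerm ha, dotProduct_sub, dotProduct_smul, hv,
    smul_eq_mul, sub_le_self_iff] at h
  exact nonneg_of_mul_nonneg_left h hn

end DecidableEq

section IsCombination

variable [Fintype ι]

variable (P a) in
/-- The root `k` is the combination of the roots `a i` with coefficients `c`, the same holds for the
coroots, and `k` has the length of each `a i`. This realises the root `c` of `A` in `P`. -/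
structure IsCombination (c : κ → ℤ) (k : ι) : Prop where
  root : P.root k = ∑ i, c i • P.root (a i)
  coroot : P.coroot k = ∑ i, c i • P.coroot (a i)
  sqLength : ∀ i, sqLength P k = sqLength P (a i)

theorem sqLength_eq (hA : IsADE A) (ha : ∀ j, restriction P a (a j) = A.col j) (i j : κ) :
    sqLength P (a i) = sqLength P (a j) := by
  refine hA.forall_of_apply (p := fun j => sqLength P (a i) = sqLength P (a j))
    (fun k l hkl h => h.trans ?_) rfl j
  have hlen := pairingIn_mul_sqLength (P := P) (a k) (a l)
  have hpair (k l : κ) : P.pairingIn ℤ (a l) (a k) = A k l := congrFun (ha l) k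
  rw [hpair, hpair, hA.isSymm.apply] at hlen
  exact mul_left_cancel₀ (hA.isSymm.apply k l ▸ hkl) hlen

namespace IsCombination

variable {c : κ → ℤ} {k l : ι}

theorem single [DecidableEq κ] (hA : IsADE A) (ha : ∀ j, restriction P a (a j) = A.col j) (i : κ) :
    IsCombination P a (Pi.single i 1) (a i) where
  root := by simp [Pi.single_apply]
  coroot := by simp [Pi.single_apply]
  sqLength := sqLength_eq hA ha i

theorem unique (hk : IsCombination P a c k) (hl : IsCombination P a c l) : k = l :=
  P.root.injective (hk.root.trans hl.root.symm)

theorem pairingIn_left (h : IsCombination P a c k) (l : ι) :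
    P.pairingIn ℤ k l = c ⬝ᵥ fun i => P.pairingIn ℤ (a i) l := by
  apply (algebraMap ℤ K).injective_int
  rw [P.algebraMap_pairingIn, ← P.root_coroot_eq_pairing, h.root]
  simp [dotProduct, pairing_eq_intCast, ← zsmul_eq_mul]

theorem pairingIn_right (h : IsCombination P a c k) (l : ι) :
    P.pairingIn ℤ l k = c ⬝ᵥ restriction P a l := by
  apply (algebraMap ℤ K).injective_int
  rw [P.algebraMap_pairingIn, ← P.root_coroot_eq_pairing, h.coroot]
  simp [dotProduct, restriction, pairing_eq_intCast, ← zsmul_eq_mul]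

theorem restriction_eq_mulVec (h : IsCombination P a c k)
    (ha : ∀ j, restriction P a (a j) = A.col j) : restriction P a k = A *ᵥ c := by
  ext i
  refine (h.pairingIn_left (a i)).trans ((dotProduct_comm _ _).trans ?_)
  exact congrArg (· ⬝ᵥ c) (funext fun j => congrFun (ha j) i)

theorem reflectionPerm [DecidableEq κ] (h : IsCombination P a c k) (hA : A.IsSymm)
    (ha : ∀ j, restriction P a (a j) = A.col j) (i : κ) :
    IsCombination P a (simpleReflection A i c) (P.reflectionPerm (a i) k) where
  root := by
    have hi : P.pairingIn ℤ k (a i) = (A *ᵥ c) i := congrFun (h.restriction_eq_mulVec ha) i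
    rw [sum_simpleReflection_smul, root_reflectionPerm_eq, hi, h.root]
  coroot := by
    have hi : P.pairingIn ℤ (a i) k = (A *ᵥ c) i := by
      rw [h.pairingIn_right, ha, dotProduct_comm]
      exact congrArg (· ⬝ᵥ c) (funext fun j => hA.apply i j)
    rw [sum_simpleReflection_smul, P.coroot_reflectionPerm, P.coreflection_apply_coroot,
      ← h.coroot, pairing_eq_intCast, hi, Int.cast_smul_eq_zsmul]
  sqLength := by simpa only [sqLength_reflectionPerm] using h.sqLength

end IsCombination

theorem exists_isCombination (hA : IsADE A)
    (ha : ∀ j, restriction P a (a j) = A.col j) {c : κ → ℤ} (hc : IsRoot A c) :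
    ∃ k, IsCombination P a c k := by
  classical
  obtain ⟨i, -⟩ := Function.ne_iff.1 hc.ne_zero
  exact IsRoot.induction hA (p := fun c => ∃ k, IsCombination P a c k)
    (fun i _ ⟨_, hk⟩ => ⟨_, hk.reflectionPerm hA.isSymm ha i⟩) (IsRoot.single hA i)
    ⟨a i, .single hA ha i⟩ hc

/-- The span of the `a i` is stable under every reflection: under those in their combinations by
construction, under the others because they fix it. -/
theorem span_root_eq_top_of_isIrreducible [Nonempty κ] [P.IsIrreducible]
    (hcomb : ∀ b, restriction P a b ≠ 0 → ∃ c, IsCombination P a c b) :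
    Submodule.span K (Set.range (P.root ∘ a)) = ⊤ := by
  have hmem (i : κ) : P.root (a i) ∈ Submodule.span K (Set.range (P.root ∘ a)) :=
    Submodule.subset_span ⟨i, rfl⟩
  refine RootPairing.IsIrreducible.eq_top_of_invtSubmodule_reflection (P := P) _
    (fun b x hx => ?_) ((Submodule.ne_bot_iff _).2
      ⟨_, hmem (Classical.arbitrary κ), P.ne_zero _⟩)
  rw [Submodule.mem_comap, LinearEquiv.coe_coe, P.reflection_apply]
  by_cases hb : restriction P a b = 0
  · rwa [coroot'_eq_zero_of_mem_span hb hx, zero_smul, sub_zero]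
  · obtain ⟨c, hc⟩ := hcomb b hb
    refine sub_mem hx (Submodule.smul_mem _ _ ?_)
    rw [hc.root]
    exact sum_mem fun i _ => zsmul_mem (hmem i) _

theorem card_add_finrank_le_of_isIrreducible [Nonempty κ] [P.IsIrreducible]
    {s : Finset (κ → ℤ)}
    (hcomb : ∀ b, restriction P a b ≠ 0 → ∃ c ∈ s, IsCombination P a c b) :
    Fintype.card ι + finrank K M ≤ s.card + Fintype.card κ := by
  have htop := span_root_eq_top_of_isIrreducible fun b hb =>
    (hcomb b hb).imp fun _ => And.right
  have hne (b : ι) : restriction P a b ≠ 0 := fun hb => by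
    have h := coroot'_eq_zero_of_mem_span hb (x := P.root b) (htop ▸ Submodule.mem_top)
    rw [P.root_coroot'_eq_pairing, P.pairing_same] at h
    exact two_ne_zero h
  choose c hc hcb using fun b => hcomb b (hne b)
  refine add_le_add (Finset.card_le_card_of_injOn c (fun b _ => hc b) fun b _ d _ h => ?_) ?_
  · exact (hcb b).unique (h ▸ hcb d)
  · rw [← finrank_top, ← htop]
    exact finrank_range_le_card _

end IsCombination

section E₇

variable {a : Fin 7 → ι} {b t : ι}

/-- The coefficients of the highest root of `E₇`. -/
def theta : Fin 7 → ℤ := ![2, 2, 3, 4, 3, 2, 1]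

theorem isRoot_theta : IsRoot E₇ theta := by unfold IsRoot; decide +kernel

theorem mulVec_theta : E₇ *ᵥ theta = Pi.single 0 1 := by decide +kernel

theorem theta_dotProduct (m : Fin 7 → ℤ) : theta ⬝ᵥ m =
    2 * m 0 + 2 * m 1 + 3 * m 2 + 4 * m 3 + 3 * m 4 + 2 * m 5 + m 6 := by
  simp [dotProduct, Fin.sum_univ_seven, theta]

theorem theta_dotProduct_pos {m : Fin 7 → ℤ} (hm : 0 ≤ m) (h0 : m ≠ 0) : 0 < theta ⬝ᵥ m := by
  have htheta (i : Fin 7) : 0 < theta i := by revert i; decide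
  obtain ⟨i, hi⟩ := Function.ne_iff.1 h0
  exact Finset.sum_pos' (fun i _ => mul_nonneg (htheta i).le (hm i))
    ⟨i, Finset.mem_univ i, mul_pos (htheta i) ((hm i).lt_of_ne' hi)⟩

theorem eq_single_of_theta_dotProduct_eq_one {m : Fin 7 → ℤ} (hm : 0 ≤ m) (h : theta ⬝ᵥ m = 1) :
    m = Pi.single 6 1 := by
  rw [theta_dotProduct] at h
  have hm (i : Fin 7) : 0 ≤ m i := hm i
  have := hm 0
  have := hm 1
  have := hm 2
  have := hm 3
  have := hm 4
  have := hm 5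
  have := hm 6
  ext i
  fin_cases i <;> simp <;> omega

variable [P.IsReduced]

/-- The reflection of `a 6` in `b` is a root of the length of the highest root `t` of `E₇`. Its
pairing with `t` would be at most `-2`, so it would be `-t`, which is orthogonal to `a 5`. -/
theorem pairingIn_mul_pairingIn_theta_lt_two [Fintype ι]
    (ha : ∀ j, restriction P a (a j) = E₇.col j) (ht : IsCombination P a theta t)
    (hb : P.pairingIn ℤ b (a 5) = 0) :
    P.pairingIn ℤ (a 6) b * P.pairingIn ℤ b t < 2 := by
  by_contra! h
  set s := P.reflectionPerm b (a 6) with hs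
  have h6 : P.pairingIn ℤ (a 6) t = 0 := by
    rw [ht.pairingIn_right, ha]
    decide
  have hst : P.pairingIn ℤ s t ≤ -2 := by
    rw [hs, pairingIn_reflectionPerm_left, h6]
    linarith
  have hts : P.pairingIn ℤ t s = P.pairingIn ℤ s t :=
    pairingIn_comm_of_sqLength_eq (by rw [hs, sqLength_reflectionPerm, ht.sqLength 6])
  have hneg : P.root s = -P.root t := by
    have hmem := P.pairingIn_pairingIn_mem_set_of_isCrystal_of_isRed s t
    simp only [Set.mem_insert_iff, Set.mem_singleton_iff, Prod.mk.injEq] at hmem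
    exact (P.pairingIn_neg_two_neg_two_iff ℤ s t).1 (by omega)
  have hs' : s = P.reflectionPerm t t := P.root.injective <| by
    rw [hneg, P.root_reflectionPerm, P.reflection_apply_self]
  have ht5 : P.pairingIn ℤ t (a 5) = 0 :=
    congrFun ((ht.restriction_eq_mulVec ha).trans mulVec_theta) 5
  have h5 : P.pairingIn ℤ s (a 5) = E₇ 5 6 := by
    rw [hs, pairingIn_reflectionPerm_left, hb, mul_zero, sub_zero]
    exact congrFun (ha 6) 5
  rw [hs', P.pairingIn_reflectionPerm_self_left, ht5] at h5
  exact absurd h5 (by decide)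

/-- If `⟨b, t⟩ ≥ 2`, then `b` is a longer root, and `⟨b, a i⟩ = ⟨b, t⟩ * ⟨a i, b⟩` forces the
`⟨a i, b⟩` to be the minuscule weight. -/
theorem eq_or_restriction_eq_single [Fintype ι]
    (ha : ∀ j, restriction P a (a j) = E₇.col j) (ht : IsCombination P a theta t)
    (hb : 0 ≤ restriction P a b) (hb0 : restriction P a b ≠ 0) :
    b = t ∨ restriction P a b = Pi.single 6 1 := by
  refine or_iff_not_imp_left.2 fun hbt => eq_single_of_theta_dotProduct_eq_one hb ?_
  have hpos := theta_dotProduct_pos hb hb0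
  have hpair := ht.pairingIn_right b
  by_contra hne
  have hmul : restriction P a b = P.pairingIn ℤ b t • fun i => P.pairingIn ℤ (a i) b :=
    funext fun i => pairingIn_eq_mul_of_two_le hbt (by omega) (ht.sqLength i)
  have hpos' : 0 < P.pairingIn ℤ b t := hpair ▸ hpos
  have hsingle : (fun i => P.pairingIn ℤ (a i) b) = Pi.single 6 1 := by
    refine eq_single_of_theta_dotProduct_eq_one (fun i => ?_) ?_
    · exact nonneg_of_mul_nonneg_right ((hb i).trans_eq (congrFun hmul i)) hpos'
    · rw [hmul, dotProduct_smul, smul_eq_mul] at hpair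
      exact mul_left_cancel₀ hpos'.ne' (hpair.symm.trans (mul_one _).symm)
  have h5 : P.pairingIn ℤ b (a 5) = 0 :=
    (congrFun hmul 5).trans (by simp [hsingle])
  have h6 : P.pairingIn ℤ (a 6) b = 1 := congrFun hsingle 6
  have hlt := pairingIn_mul_pairingIn_theta_lt_two ha ht h5
  rw [h6] at hlt
  omega

theorem exists_restriction_eq_mulVec [Finite ι]
    (ha : ∀ j, restriction P a (a j) = E₇.col j)
    (hminuscule : ∀ b, restriction P a b ≠ Pi.single 6 1) (hb : restriction P a b ≠ 0) :
    ∃ c, IsRoot E₇ c ∧ restriction P a b = E₇ *ᵥ c := by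
  cases nonempty_fintype ι
  by_contra hcon
  obtain ⟨t, ht⟩ := exists_isCombination isADE_E₇ ha isRoot_theta
  have hrefl (i : Fin 7) (d : ι)
      (hd : restriction P a d ≠ 0 ∧ ¬ ∃ c, IsRoot E₇ c ∧ restriction P a d = E₇ *ᵥ c) :
      restriction P a (P.reflectionPerm (a i) d) ≠ 0 ∧
        ¬ ∃ c, IsRoot E₇ c ∧ restriction P a (P.reflectionPerm (a i) d) = E₇ *ᵥ c := by
    have hd' : P.reflectionPerm (a i) (P.reflectionPerm (a i) d) = d := P.reflectionPerm_self _ _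
    refine ⟨fun h => hd.1 ?_, fun ⟨c, hc, h⟩ => hd.2 ?_⟩
    · rw [← hd', restriction_reflectionPerm ha, h, Pi.zero_apply, zero_smul, sub_zero]
    · exact ⟨_, hc.simpleReflection isADE_E₇ i,
        hd' ▸ restriction_reflectionPerm_of_eq_mulVec ha h i⟩
  obtain ⟨d, hd, hdom⟩ := exists_restriction_nonneg isADE_E₇.det_ne_zero ha hrefl ⟨hb, hcon⟩
  obtain rfl | h := eq_or_restriction_eq_single ha ht hdom hd.1
  · exact hd.2 ⟨theta, isRoot_theta, ht.restriction_eq_mulVec ha⟩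
  · exact hminuscule d h

/-- The system `E₇` has `126` roots and rank `7`. -/
theorem exists_restriction_eq_single [Fintype ι] [P.IsIrreducible]
    (ha : ∀ j, restriction P a (a j) = E₇.col j)
    (huniq : ∀ c, IsRoot E₇ c → ∀ b d, restriction P a b = E₇ *ᵥ c →
      restriction P a d = E₇ *ᵥ c → b = d)
    (hcard : 126 + 7 < Fintype.card ι + finrank K M) : ∃ b, restriction P a b = Pi.single 6 1 := by
  by_contra! hminuscule
  obtain ⟨s, hs, hscard⟩ := exists_finset_isRoot_E₇
  have hle := card_add_finrank_le_of_isIrreducible (P := P) (a := a) (s := s) fun b hb => by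
    obtain ⟨c, hc, h⟩ := exists_restriction_eq_mulVec ha hminuscule hb
    obtain ⟨k, hk⟩ := exists_isCombination isADE_E₇ ha hc
    exact ⟨c, (hs c).2 hc, huniq c hc k b (hk.restriction_eq_mulVec ha) h ▸ hk⟩
  rw [hscard, Fintype.card_fin] at hle
  omega

theorem pairingIn_eq_single_of_restriction_eq_single [Finite ι]
    (ha : ∀ j, restriction P a (a j) = E₇.col j)
    (hb : restriction P a b = Pi.single 6 (-1)) (i : Fin 7) :
    P.pairingIn ℤ (a i) b = (Pi.single 6 (-1) : Fin 7 → ℤ) i := by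
  cases nonempty_fintype ι
  have hbi (i : Fin 7) : P.pairingIn ℤ b (a i) = (Pi.single 6 (-1) : Fin 7 → ℤ) i := congrFun hb i
  obtain ⟨t, ht⟩ := exists_isCombination isADE_E₇ ha isRoot_theta
  obtain rfl | hi := eq_or_ne i 6
  · have hlt := pairingIn_mul_pairingIn_theta_lt_two ha ht (b := b) (by rw [hbi]; rfl)
    have hbt : P.pairingIn ℤ b t = -1 := by
      rw [ht.pairingIn_right, hb]
      decide
    have hmem := P.pairingIn_pairingIn_mem_set_of_isCrystal_of_isRed b (a 6)
    rw [hbi, Pi.single_eq_same] at hmem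
    rw [hbt] at hlt
    rw [Pi.single_eq_same]
    simp only [Set.mem_insert_iff, Set.mem_singleton_iff, Prod.mk.injEq] at hmem
    omega
  · have h := hbi i
    rw [Pi.single_eq_of_ne hi] at h ⊢
    exact P.pairingIn_eq_zero_iff.1 h

/-- If `k` is the difference, then `⟨k, a i⟩ ≥ 2` would divide `⟨k, a j⟩ = -1` for a
neighbour `j` of `i`. -/
theorem root_sub_root_notMem_range [Finite ι]
    (ha : ∀ j, restriction P a (a j) = E₇.col j)
    (hb : restriction P a b = Pi.single 6 (-1)) (i : Fin 7) :
    P.root (a i) - P.root b ∉ Set.range P.root := by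
  cases nonempty_fintype ι
  rintro ⟨k, hk⟩
  have hpair (j : Fin 7) :
      P.pairingIn ℤ k (a j) = E₇ j i - (Pi.single 6 (-1) : Fin 7 → ℤ) j := by
    have h : P.root k = (1 : ℤ) • P.root (a i) + (-1 : ℤ) • P.root b := by
      rw [hk, one_smul, neg_smul, one_smul, sub_eq_add_neg]
    rw [RootPairing.pairingIn_eq_add_of_root_eq_smul_add_smul h, one_smul, neg_smul, one_smul,
      ← sub_eq_add_neg]
    exact congrArg₂ (· - ·) (congrFun (ha i) j) (congrFun hb j)
  have hne : k ≠ a i := by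
    rintro rfl
    exact P.ne_zero b (sub_eq_self.1 hk.symm)
  have htwo : 2 ≤ E₇ i i - (Pi.single 6 (-1) : Fin 7 → ℤ) i := by
    clear * -
    revert i
    decide +kernel
  obtain ⟨j, hj⟩ : ∃ j, E₇ j i - (Pi.single 6 (-1) : Fin 7 → ℤ) j = -1 := by
    clear * -
    revert i
    decide +kernel
  have hdvd := pairingIn_eq_mul_of_two_le hne (hpair i ▸ htwo) (sqLength_eq isADE_E₇ ha i j)
  rw [hpair, hj, hpair] at hdvd
  have hone := Int.le_of_dvd one_pos ((Int.dvd_neg (b := 1)).1 ⟨_, hdvd⟩)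
  omega

/-- The root `b` extends the Dynkin diagram of the `a i` to that of `E₈`. -/
theorem exists_extending_root [Fintype ι] [P.IsIrreducible]
    (ha : ∀ j, restriction P a (a j) = E₇.col j)
    (huniq : ∀ c, IsRoot E₇ c → ∀ b d, restriction P a b = E₇ *ᵥ c →
      restriction P a d = E₇ *ᵥ c → b = d)
    (hcard : 126 + 7 < Fintype.card ι + finrank K M) :
    ∃ b, ∀ i, P.pairingIn ℤ b (a i) = (Pi.single 6 (-1) : Fin 7 → ℤ) i ∧
      P.pairingIn ℤ (a i) b = (Pi.single 6 (-1) : Fin 7 → ℤ) i ∧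
      P.root (a i) - P.root b ∉ Set.range P.root := by
  obtain ⟨d, hd⟩ := exists_restriction_eq_single ha huniq hcard
  have hb : restriction P a (P.reflectionPerm d d) = Pi.single 6 (-1) := by
    rw [Pi.single_neg, ← hd]
    exact funext fun i => P.pairingIn_reflectionPerm_self_left ℤ d (a i)
  exact ⟨_, fun i => ⟨congrFun hb i, pairingIn_eq_single_of_restriction_eq_single ha hb i,
    root_sub_root_notMem_range ha hb i⟩⟩

end E₇

end RootSystem

/-! ### Cartan subalgebras containing a Chevalley system -/

section Cartan

variable {K : Type*} [Field K] {L : Type*} [LieRing L] [LieAlgebra K L]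

theorem isCartanSubalgebra_map_incl {Z : LieSubalgebra K L} {H : LieSubalgebra K Z}
    [hH : H.IsCartanSubalgebra] (h : (H.map Z.incl).normalizer ≤ Z) :
    (H.map Z.incl).IsCartanSubalgebra where
  nilpotent := (LieEquiv.nilpotent_iff_equiv_nilpotent
    (H.equivMapOfInjective (f := Z.incl) Subtype.val_injective)).1 hH.nilpotent
  self_normalizing := by
    refine le_antisymm (fun y hy => ?_) (LieSubalgebra.le_normalizer _)
    refine ⟨⟨y, h hy⟩, ?_, rfl⟩
    change _ ∈ H
    rw [← hH.self_normalizing, LieSubalgebra.mem_normalizer_iff]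
    intro z hz
    obtain ⟨w, hw, hwyz⟩ := (LieSubalgebra.mem_normalizer_iff _ y).1 hy z.1 ⟨z, hz, rfl⟩
    rwa [show ⁅(⟨y, h hy⟩ : Z), z⁆ = w from Subtype.ext hwyz.symm]

namespace ChevalleySystem

variable {ι : Type*} {A : Matrix ι ι ℤ}

variable (K) in
/-- The centralizer of the `h i`. -/
def centralizer (C : ChevalleySystem A L) : LieSubalgebra K L where
  __ := C.weightSpace K 0
  lie_mem' hx hy := by simpa using C.lie_mem_weightSpace hx hy

theorem mem_centralizer {C : ChevalleySystem A L} {x : L} :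
    x ∈ C.centralizer K ↔ ∀ i, ⁅C.h i, x⁆ = 0 := by
  change x ∈ C.weightSpace K 0 ↔ _
  simp [mem_weightSpace]

theorem lie_mem_weightSpace_of_mem_centralizer (C : ChevalleySystem A L) {χ : ι → ℤ} {x y : L}
    (hx : x ∈ C.centralizer K) (hy : y ∈ C.weightSpace K χ) : ⁅x, y⁆ ∈ C.weightSpace K χ := by
  have hx0 : x ∈ C.weightSpace K 0 := hx
  simpa using C.lie_mem_weightSpace hx0 hy

theorem h_mem_centralizer (C : ChevalleySystem A L) (i : ι) : C.h i ∈ C.centralizer K :=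
  C.h_mem_weightSpace i

theorem h_mem_map_centralizer (C : ChevalleySystem A L) (H : LieSubalgebra K (C.centralizer K))
    [hH : H.IsCartanSubalgebra] (i : ι) : C.h i ∈ H.map (C.centralizer K).incl := by
  refine ⟨⟨C.h i, C.h_mem_centralizer i⟩, ?_, rfl⟩
  change _ ∈ H
  rw [← hH.self_normalizing, LieSubalgebra.mem_normalizer_iff]
  intro y _
  rw [show ⁅(⟨C.h i, C.h_mem_centralizer i⟩ : C.centralizer K), y⁆ = 0 from
    Subtype.ext (mem_centralizer.1 y.2 i)]
  exact H.zero_mem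

/-- Each `ad (h i)` is semisimple at the eigenvalue `0`, so that normalizing a Cartan subalgebra of
the centralizer of the `h i` forces an element to lie in that centralizer. -/
theorem exists_isCartanSubalgebra [CharZero K] [FiniteDimensional K L] (C : ChevalleySystem A L) :
    ∃ T : LieSubalgebra K L, T.IsCartanSubalgebra ∧ (∀ i, C.h i ∈ T) ∧ T ≤ C.centralizer K := by
  obtain ⟨x, hx⟩ := exists_isCartanSubalgebra_engel K (C.centralizer K)
  have hle : (LieSubalgebra.engel K x).map (C.centralizer K).incl ≤ C.centralizer K := by
    rintro _ ⟨t, -, rfl⟩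
    exact t.2
  refine ⟨_, isCartanSubalgebra_map_incl fun y hy => mem_centralizer.2 fun i => ?_,
    C.h_mem_map_centralizer _, hle⟩
  rw [LieSubalgebra.mem_normalizer_iff] at hy
  have h0 : ⁅C.h i, ⁅C.h i, y⁆⁆ = 0 := by
    rw [← lie_skew (C.h i) y, lie_neg,
      mem_centralizer.1 (hle (hy _ (C.h_mem_map_centralizer _ i))) i, neg_zero]
  exact lie_h_sub_smul_eq_zero (K := K) (C.isSl2Triple i) (k := 0) (x := y) (by simp) (by simp [h0])

end ChevalleySystem

variable (T : LieSubalgebra K L) [T.IsCartanSubalgebra]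

theorem ChevalleySystem.exists_weight {ι : Type*} {A : Matrix ι ι ℤ} (C : ChevalleySystem A L)
    (hT : T ≤ C.centralizer K) {χ : ι → ℤ} (hχ : finrank K (C.weightSpace K χ) = 1) {x : L}
    (hx : x ∈ C.weightSpace K χ) (hx0 : x ≠ 0) :
    ∃ α : Weight K T L, x ∈ rootSpace T α ∧ ∀ t : T, ⁅(t : L), x⁆ = α t • x := by
  have exists_eigenvalue (t : T) : ∃ c : K, ⁅(t : L), x⁆ = c • x := by
    obtain ⟨c, hc⟩ := exists_smul_eq_of_finrank_eq_one hχ (x := ⟨x, hx⟩) (by simpa using hx0)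
      ⟨_, C.lie_mem_weightSpace_of_mem_centralizer (hT t.2) hx⟩
    exact ⟨c, (congrArg Subtype.val hc).symm⟩
  choose c hc using exists_eigenvalue
  have hxc : x ∈ genWeightSpace L c :=
    weightSpace_le_genWeightSpace L c ((LieModule.mem_weightSpace ..).2 hc)
  refine ⟨⟨c, fun h => hx0 ?_⟩, hxc, hc⟩
  simpa [h] using hxc

variable [FiniteDimensional K L] [IsTriangularizable K T L]

theorem finrank_le_sum_finrank_genWeightSpace :
    finrank K L ≤ ∑ χ : Weight K T L, finrank K (genWeightSpace L χ) := by
  classical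
  have iSup_eq_top : ⨆ χ : Weight K T L, (genWeightSpace L χ).toSubmodule = ⊤ := by
    rw [← LieSubmodule.iSup_toSubmodule, iSup_genWeightSpace_eq_top', LieSubmodule.top_toSubmodule]
  have h := LinearMap.finrank_le_finrank_of_surjective
    (f := DirectSum.coeLinearMap fun χ : Weight K T L => (genWeightSpace L χ).toSubmodule) <| by
      rw [← LinearMap.range_eq_top, ← iSup_eq_top]
      exact DirectSum.range_coeLinearMap
  rwa [finrank_directSum] at h

theorem finrank_le_card_root_add_finrank [CharZero K] [IsKilling K L] :
    finrank K L ≤ Fintype.card T.root + finrank K (Dual K T) := by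
  classical
  refine (finrank_le_sum_finrank_genWeightSpace T).trans ?_
  rw [← Finset.sum_filter_add_sum_filter_not _ (fun χ : Weight K T L => χ.IsNonZero)]
  gcongr
  · refine (Finset.sum_le_card_nsmul _ _ 1 fun χ hχ => ?_).trans ?_
    · exact (IsKilling.finrank_rootSpace_eq_one χ (by simpa using hχ)).le
    · rw [Fintype.card_coe, smul_eq_mul, mul_one]
  · have coe_eq_zero : ∀ χ ∈ Finset.univ.filter (fun χ : Weight K T L => ¬ χ.IsNonZero),
        (χ : T → K) = 0 := fun χ hχ => not_not.1 (Finset.mem_filter.1 hχ).2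
    rw [Subspace.dual_finrank_eq]
    refine (Finset.sum_le_card_nsmul _ _ (finrank K T) fun χ hχ => ?_).trans ?_
    · rw [coe_eq_zero χ hχ]
      exact (congrArg (fun N : LieSubmodule K T L => finrank K N.toSubmodule)
        (rootSpace_zero_eq K L T)).le
    · refine (Nat.mul_le_mul_right _ (Finset.card_le_one.2 fun χ hχ ψ hψ => ?_)).trans (by simp)
      exact DFunLike.coe_injective ((coe_eq_zero χ hχ).trans (coe_eq_zero ψ hψ).symm)

end Cartan

/-! ### Conjugacy of embeddings -/

section RootTriples

variable {K : Type*} [Field K] [CharZero K] {L : Type*} [LieRing L] [LieAlgebra K L]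
  [FiniteDimensional K L] {T : LieSubalgebra K L} [T.IsCartanSubalgebra]

/-- An `sl₂`-triple formed by vectors in the root spaces of `b` and `-b`. -/
structure IsRootTriple (b : T.root) (h e f : L) : Prop extends IsSl2Triple h e f where
  e_mem : e ∈ rootSpace T b.1
  f_mem : f ∈ rootSpace T (-b.1 : T → K)

theorem ChevalleySystem.exists_isRootTriple_of_finrank_eq_one {ι : Type*}
    {A : Matrix ι ι ℤ} (C : ChevalleySystem A L) (hCT : ∀ i, C.h i ∈ T)
    (hT : T ≤ C.centralizer K) (i : ι) (he : finrank K (C.weightSpace K (A.col i)) = 1)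
    (hf : finrank K (C.weightSpace K (-A.col i)) = 1) :
    ∃ b : T.root, IsRootTriple b (C.h i) (C.e i) (C.f i) := by
  have t := C.isSl2Triple i
  obtain ⟨α, heα, hα⟩ := C.exists_weight T hT he (C.e_mem_weightSpace i) (C.e_ne_zero i)
  obtain ⟨β, hfβ, hβ⟩ :=
    C.exists_weight T hT hf (C.f_mem_weightSpace i) (C.swap.e_ne_zero i)
  have β_eq : (β : T → K) = -α := by
    funext s
    have h0 : ⁅(s : L), ⁅C.e i, C.f i⁆⁆ = 0 := by
      rw [C.lie_e_f, ← lie_skew, ChevalleySystem.mem_centralizer.1 (hT s.2), neg_zero]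
    rw [leibniz_lie, hα, hβ, smul_lie, lie_smul, C.lie_e_f, ← add_smul] at h0
    exact eq_neg_of_add_eq_zero_right ((smul_eq_zero.1 h0).resolve_right t.h_ne_zero)
  have α_ne_zero : α.IsNonZero := fun h0 => by
    have := (hα ⟨C.h i, hCT i⟩).symm.trans (t.lie_h_e_smul K)
    rw [show α ⟨C.h i, hCT i⟩ = 0 from congrFun h0 _, zero_smul, eq_comm, smul_eq_zero] at this
    exact this.elim two_ne_zero (C.e_ne_zero i)
  exact ⟨⟨α, by simpa using α_ne_zero⟩, t, heα, β_eq ▸ hfβ⟩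

variable [IsKilling K L] [IsTriangularizable K T L]

theorem exists_isRootTriple (b : T.root) : ∃ h e f : L, IsRootTriple b h e f := by
  obtain ⟨h, e, f, t, he, hf⟩ :=
    IsKilling.exists_isSl2Triple_of_weight_isNonZero (T.isNonZero_coe_root b)
  exact ⟨h, e, f, t, he, hf⟩

namespace IsRootTriple

variable {b c : T.root} {h e f h' e' f' : L}

theorem h_eq_coroot (t : IsRootTriple b h e f) : h = IsKilling.coroot b.1 :=
  t.toIsSl2Triple.h_eq_coroot (T.isNonZero_coe_root b) t.e_mem t.f_mem

theorem h_mem (t : IsRootTriple b h e f) : h ∈ T := t.h_eq_coroot ▸ Subtype.property _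

theorem lie_h (t : IsRootTriple b h e f) {x : L} (hx : x ∈ rootSpace T c.1) :
    ⁅h, x⁆ = (IsKilling.rootSystem T).pairingIn ℤ c b • x := by
  rw [← Int.cast_smul_eq_zsmul K, ← pairing_eq_intCast, t.h_eq_coroot]
  exact IsKilling.lie_eq_smul_of_mem_rootSpace hx _

theorem lie_h_neg (t : IsRootTriple b h e f) {x : L} (hx : x ∈ rootSpace T (-c.1 : T → K)) :
    ⁅h, x⁆ = -((IsKilling.rootSystem T).pairingIn ℤ c b • x) := by
  rw [← Int.cast_smul_eq_zsmul K, ← pairing_eq_intCast, t.h_eq_coroot, ← neg_smul]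
  exact IsKilling.lie_eq_smul_of_mem_rootSpace hx _

theorem lie_e_f_eq_zero (t : IsRootTriple b h e f) (t' : IsRootTriple c h' e' f') (hbc : b ≠ c)
    (hsub : (IsKilling.rootSystem T).root b - (IsKilling.rootSystem T).root c ∉
      Set.range (IsKilling.rootSystem T).root) : ⁅e, f'⁆ = 0 := by
  have rootSpace_eq_bot : rootSpace T ((b.1 : T → K) + -c.1) = ⊥ := by
    by_contra hne
    let γ : Weight K T L := ⟨_, hne⟩
    by_cases hγ : γ.IsZero
    · exact hbc (Subtype.ext (DFunLike.coe_injective (add_neg_eq_zero.1 hγ)))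
    · refine hsub ⟨⟨γ, by simpa using hγ⟩, ?_⟩
      ext t
      exact (sub_eq_add_neg _ _).symm
  exact (LieSubmodule.mem_bot _).1 (rootSpace_eq_bot.le
    (lie_mem_genWeightSpace_of_mem_genWeightSpace t.e_mem t'.f_mem))

end IsRootTriple

namespace ChevalleySystem

variable {ι : Type*} {A : Matrix ι ι ℤ}

/-- The Chevalley system formed by `sl₂`-triples for roots `a i` whose differences are not roots,
of type the matrix of pairings of the `a i`. -/
def ofIsRootTriple {a : ι → T.root} {h e f : ι → L}
    (t : ∀ i, IsRootTriple (a i) (h i) (e i) (f i))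
    (hA : ∀ i j, (IsKilling.rootSystem T).pairingIn ℤ (a j) (a i) = A i j)
    (hef : ∀ i j, i ≠ j → ⁅e i, f j⁆ = 0) : ChevalleySystem A L where
  h := h
  e := e
  f := f
  isSl2Triple i := (t i).toIsSl2Triple
  lie_h_h i j :=
    congrArg Subtype.val (trivial_lie_zero T T ⟨h i, (t i).h_mem⟩ ⟨h j, (t j).h_mem⟩)
  lie_e_f_of_ne := hef
  lie_h_e i j := hA i j ▸ (t i).lie_h (t j).e_mem
  lie_h_f i j := hA i j ▸ (t i).lie_h_neg (t j).f_mem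

variable {C : ChevalleySystem A L} {a : ι → T.root}

theorem mem_weightSpace_restriction (t : ∀ i, IsRootTriple (a i) (C.h i) (C.e i) (C.f i))
    {b : T.root} {x : L} (hx : x ∈ rootSpace T b.1) :
    x ∈ C.weightSpace K (restriction (IsKilling.rootSystem T) a b) :=
  C.mem_weightSpace.2 fun i => (t i).lie_h hx

theorem restriction_eq_col (t : ∀ i, IsRootTriple (a i) (C.h i) (C.e i) (C.f i)) (j : ι) :
    restriction (IsKilling.rootSystem T) a (a j) = A.col j :=
  C.eq_of_mem_weightSpace (K := K) (C.e_ne_zero j)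
    (mem_weightSpace_restriction t (t j).e_mem) (C.e_mem_weightSpace j)

theorem eq_of_restriction_eq (t : ∀ i, IsRootTriple (a i) (C.h i) (C.e i) (C.f i))
    {χ : ι → ℤ} (hχ : finrank K (C.weightSpace K χ) = 1) {b d : T.root}
    (hb : restriction (IsKilling.rootSystem T) a b = χ)
    (hd : restriction (IsKilling.rootSystem T) a d = χ) : b = d := by
  obtain ⟨x, hx, hx0⟩ := b.1.exists_ne_zero
  obtain ⟨y, hy, hy0⟩ := d.1.exists_ne_zero
  obtain ⟨s, hs⟩ := exists_smul_eq_of_finrank_eq_one hχ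
    (x := ⟨x, hb ▸ mem_weightSpace_restriction t hx⟩) (by simpa using hx0)
    ⟨y, hd ▸ mem_weightSpace_restriction t hy⟩
  have hyb : y ∈ rootSpace T b.1 := by
    rw [← show s • x = y from congrArg Subtype.val hs]
    exact (rootSpace T b.1).smul_mem s hx
  refine Subtype.ext (DFunLike.coe_injective (funext fun z => ?_))
  exact smul_left_injective K hy0 ((IsKilling.lie_eq_smul_of_mem_rootSpace hyb z).symm.trans
    (IsKilling.lie_eq_smul_of_mem_rootSpace hy z))

theorem exists_extension_of_root {n : ℕ} {B : Matrix (Fin (n + 1)) (Fin (n + 1)) ℤ}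
    {A : Matrix (Fin n) (Fin n) ℤ} (hBA : B.submatrix Fin.castSucc Fin.castSucc = A)
    {C : ChevalleySystem A L} {a : Fin n → T.root}
    (t : ∀ i, IsRootTriple (a i) (C.h i) (C.e i) (C.f i)) {b : T.root} (hab : ∀ i, a i ≠ b)
    (hB : B (Fin.last n) (Fin.last n) = 2)
    (hba : ∀ i, (IsKilling.rootSystem T).pairingIn ℤ b (a i) = B i.castSucc (Fin.last n))
    (hab' : ∀ i, (IsKilling.rootSystem T).pairingIn ℤ (a i) b = B (Fin.last n) i.castSucc)
    (hsub : ∀ i, (IsKilling.rootSystem T).root (a i) - (IsKilling.rootSystem T).root b ∉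
      Set.range (IsKilling.rootSystem T).root) :
    ∃ D : ChevalleySystem B L, ∀ i : Fin n, D.e i.castSucc = C.e i ∧ D.f i.castSucc = C.f i := by
  obtain ⟨h, e, f, tb⟩ := exists_isRootTriple b
  have hsub' (i : Fin n) : (IsKilling.rootSystem T).root b - (IsKilling.rootSystem T).root (a i) ∉
      Set.range (IsKilling.rootSystem T).root := by
    rw [← neg_sub, RootPairing.neg_mem_range_root_iff]
    exact hsub i
  let a' : Fin (n + 1) → T.root := Fin.snoc a b
  let h' : Fin (n + 1) → L := Fin.snoc C.h h
  let e' : Fin (n + 1) → L := Fin.snoc C.e e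
  let f' : Fin (n + 1) → L := Fin.snoc C.f f
  have triple (i : Fin (n + 1)) : IsRootTriple (a' i) (h' i) (e' i) (f' i) := by
    cases i using Fin.lastCases with
    | last => simpa [a', h', e', f'] using tb
    | cast i => simpa [a', h', e', f'] using t i
  have pairing (i j : Fin (n + 1)) :
      (IsKilling.rootSystem T).pairingIn ℤ (a' j) (a' i) = B i j := by
    cases i using Fin.lastCases <;> cases j using Fin.lastCases
    case last.last => simp [a', hB]
    case last.cast j => simp [a', hab']
    case cast.last i => simp [a', hba]
    case cast.cast i j => simpa [a', ← hBA, restriction] using congrFun (restriction_eq_col t j) i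
  have lie_e_f (i j : Fin (n + 1)) (hij : i ≠ j) : ⁅e' i, f' j⁆ = 0 := by
    cases i using Fin.lastCases <;> cases j using Fin.lastCases
    case last.last => exact (hij rfl).elim
    case last.cast j => simpa [e', f'] using tb.lie_e_f_eq_zero (t j) (hab j).symm (hsub' j)
    case cast.last i => simpa [e', f'] using (t i).lie_e_f_eq_zero tb (hab i) (hsub i)
    case cast.cast i j => simpa [e', f'] using C.lie_e_f_of_ne i j (ne_of_apply_ne _ hij)
  exact ⟨ofIsRootTriple triple pairing lie_e_f,
    fun i => ⟨Fin.snoc_castSucc (α := fun _ => L) .., Fin.snoc_castSucc (α := fun _ => L) ..⟩⟩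

end ChevalleySystem

end RootTriples

section Conjugacy

theorem E₈_castSucc_last (i : Fin 7) :
    E₈ i.castSucc (Fin.last 7) = (Pi.single 6 (-1) : Fin 7 → ℤ) i := by
  fin_cases i <;> rfl

theorem E₈_last_castSucc (i : Fin 7) :
    E₈ (Fin.last 7) i.castSucc = (Pi.single 6 (-1) : Fin 7 → ℤ) i := by
  fin_cases i <;> rfl

variable {K : Type*} [Field K]

theorem exists_lieEquiv_of_isSimple {L : Type*} [LieRing L] [LieAlgebra K L] [IsSimple K L]
    [FiniteDimensional K L] {ψ : L →ₗ⁅K⁆ L} (hψ : ψ ≠ 0) : ∃ φ : L ≃ₗ⁅K⁆ L, ∀ x, φ x = ψ x := by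
  have injective : Function.Injective ψ := by
    rw [← LieHom.ker_eq_bot]
    refine (IsSimple.eq_bot_or_eq_top ψ.ker).resolve_right fun h => hψ (LieHom.ext fun x => ?_)
    exact ψ.mem_ker.1 (h ▸ LieSubmodule.mem_top x)
  exact ⟨LieEquiv.ofBijective ψ ⟨injective,
    (LinearMap.injective_iff_surjective (f := (ψ : L →ₗ[K] L))).1 injective⟩, fun _ => rfl⟩

variable [CharZero K]

theorem exists_hom_e₇_e₈ [Nontrivial (e₈ K)] : ∃ ι : e₇ K →ₗ⁅K⁆ e₈ K,
    ∀ i : Fin 7, ι (serreGen K E₇ (.E i)) = serreGen K E₈ (.E i.castSucc) ∧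
      ι (serreGen K E₇ (.F i)) = serreGen K E₈ (.F i.castSucc) := by
  obtain ⟨C, hC⟩ := exists_restrict_E₇ (ChevalleySystem.std K isADE_E₈ : ChevalleySystem E₈ (e₈ K))
  obtain ⟨ι, hE, hF⟩ := C.exists_hom (K := K) E₇_off_diag_nonpos
  exact ⟨ι, fun i => ⟨(hE i).trans (hC i).2.1, (hF i).trans (hC i).2.2⟩⟩

variable [IsAlgClosed K]

theorem ChevalleySystem.exists_extension_E₈ (C : ChevalleySystem E₇ (e₈ K)) :
    ∃ D : ChevalleySystem E₈ (e₈ K),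
      ∀ i : Fin 7, D.e i.castSucc = C.e i ∧ D.f i.castSucc = C.f i := by
  have : Nontrivial (e₈ K) := ⟨_, _, (C.isSl2Triple 0).h_ne_zero⟩
  obtain ⟨T, _, hCT, hT⟩ := C.exists_isCartanSubalgebra (K := K)
  have finrank_eq_one {c : Fin 7 → ℤ} (hc : IsRoot E₇ c) := C.finrank_weightSpace_eq_one (K := K) hc
  have triple (i : Fin 7) : ∃ b : T.root, IsRootTriple b (C.h i) (C.e i) (C.f i) := by
    have hi := IsRoot.single isADE_E₇ i
    refine C.exists_isRootTriple_of_finrank_eq_one hCT hT i ?_ ?_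
    · rw [← mulVec_single_one]
      exact finrank_eq_one hi
    · rw [← mulVec_single_one, ← mulVec_neg]
      exact finrank_eq_one hi.neg
  choose a t using triple
  obtain ⟨b, hb⟩ := exists_extending_root (restriction_eq_col t)
    (fun c hc b d => eq_of_restriction_eq t (finrank_eq_one hc))
    (le_finrank_e₈.trans (finrank_le_card_root_add_finrank T))
  refine exists_extension_of_root E₈_submatrix_castSucc t (fun i hab => ?_) rfl
    (fun i => (hb i).1.trans (E₈_castSucc_last i).symm)
    (fun i => (hb i).2.1.trans (E₈_last_castSucc i).symm) fun i => (hb i).2.2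
  have := (hb i).1
  rw [hab, RootPairing.pairingIn_same] at this
  clear * - this
  fin_cases i <;> simp at this

theorem exists_eq_lieEquiv_comp [Nontrivial (e₇ K)] [Nontrivial (e₈ K)] {ι : e₇ K →ₗ⁅K⁆ e₈ K}
    (hι : ∀ i : Fin 7, ι (serreGen K E₇ (.E i)) = serreGen K E₈ (.E i.castSucc) ∧
      ι (serreGen K E₇ (.F i)) = serreGen K E₈ (.F i.castSucc))
    {ε : e₇ K →ₗ⁅K⁆ e₈ K} (hε : Function.Injective ε) :
    ∃ φ : e₈ K ≃ₗ⁅K⁆ e₈ K, ∀ x, ε x = φ (ι x) := by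
  let C : ChevalleySystem E₇ (e₈ K) :=
    (ChevalleySystem.std K isADE_E₇ : ChevalleySystem E₇ (e₇ K)).map ε hε
  obtain ⟨D, hD⟩ := C.exists_extension_E₈
  obtain ⟨ψ, hψE, hψF⟩ := D.exists_hom (K := K) E₈_off_diag_nonpos
  have ε_eq : ε = ψ.comp ι := serre_hom_ext
    (fun i => by rw [LieHom.comp_apply, (hι i).1, hψE, (hD i).1]; rfl)
    (fun i => by rw [LieHom.comp_apply, (hι i).2, hψF, (hD i).2]; rfl)
  obtain ⟨φ, hφ⟩ := exists_lieEquiv_of_isSimple (ψ := ψ) fun h0 =>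
    D.e_ne_zero 0 (by rw [← hψE, h0, LieHom.zero_apply])
  exact ⟨φ, fun x => by rw [hφ, ε_eq, LieHom.comp_apply]⟩

end Conjugacy

end E7E8

open LieAlgebra in
theorem stmt_19_general {K : Type*} [Field K] [CharZero K] [IsAlgClosed K]
    (ε ε' : e₇ K →ₗ⁅K⁆ e₈ K) (hε : Function.Injective ε) (hε' : Function.Injective ε') :
    ∃ φ : e₈ K ≃ₗ⁅K⁆ e₈ K, ∀ x : e₇ K, ε' x = φ (ε x) := by
  rcases subsingleton_or_nontrivial (e₇ K) with _ | _
  · exact ⟨LieEquiv.refl, fun x => by simp [Subsingleton.elim x 0]⟩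
  have : Nontrivial (e₈ K) := hε.nontrivial
  obtain ⟨ι, hι⟩ := E7E8.exists_hom_e₇_e₈ (K := K)
  obtain ⟨φ, hφ⟩ := E7E8.exists_eq_lieEquiv_comp hι hε
  obtain ⟨φ', hφ'⟩ := E7E8.exists_eq_lieEquiv_comp hι hε'
  exact ⟨φ.symm.trans φ', fun x => by simp [hφ, hφ']⟩

/-- Any two injective Lie algebra homomorphisms from LieAlgebra.e₇ ℂ to LieAlgebra.e₈ ℂ are
conjugate by a Lie algebra automorphism of the codomain. -/
theorem stmt_19 (ε ε' : LieAlgebra.e₇ ℂ →ₗ⁅ℂ⁆ LieAlgebra.e₈ ℂ)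
    (hε : Function.Injective ε) (hε' : Function.Injective ε') :
    ∃ φ : LieAlgebra.e₈ ℂ ≃ₗ⁅ℂ⁆ LieAlgebra.e₈ ℂ, ∀ x : LieAlgebra.e₇ ℂ, ε' x = φ (ε x) :=
  stmt_19_general ε ε' hε hε'
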